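/- arXiv:1107.0557 — 5 statements merged into one kernel-verified Lean document; each statement's English description precedes it below -/
import Mathlib

section
/- Let M be a right R-module of projective dimension at most 1 such that Ext¹_R(M, −) commutes with direct sums of copies of R. Suppose 0 → Rⁿ → C → M → 0 is exact with Ext¹_R(C, R) = 0. Then Ext¹_R(C, R^{(κ)}) = 0 for every cardinal κ, and consequently C is projective. -/
open CategoryTheory CategoryTheory.Limits Opposite

noncomputable section

/-- The category of right `R`-modules. -/
abbrev RMod (R : Type) [Ring R] := ModuleCat.{0} Rᵐᵒᵖ

/-- `R` as a right module over itself. -/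
abbrev regR (R : Type) [Ring R] : RMod R := ModuleCat.of Rᵐᵒᵖ R

/-- The covariant functor `Ext¹_R(M, -)` (more generally `Extⁿ_R(M, -)`). -/
abbrev extFun (R : Type) [Ring R] (n : ℕ) (M : RMod R) : RMod R ⥤ ModuleCat ℤ :=
  (Ext ℤ (RMod R) n).obj (op M)

/-- `Ext¹_R(M,-)` commutes with direct limits (direct systems over directed sets). -/
def CommutesWithDirectLimits (R : Type) [Ring R] (M : RMod R) : Prop :=
  ∀ (J : Type) [Preorder J] [IsDirected J (· ≤ ·)] [Nonempty J],
    PreservesColimitsOfShape J (extFun R 1 M)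

/-- `Ext¹_R(M,-)` commutes with direct sums. -/
def CommutesWithDirectSums (R : Type) [Ring R] (M : RMod R) : Prop :=
  ∀ (ι : Type), PreservesColimitsOfShape (Discrete ι) (extFun R 1 M)

/-- `Extⁿ_R(M,-)` commutes with direct sums of copies of `R`: the canonical map
`Extⁿ_R(M,R)^{(ι)} → Extⁿ_R(M,R^{(ι)})` is an isomorphism for every index set `ι`. -/
def CommutesWithSumsOfR (R : Type) [Ring R] (n : ℕ) (M : RMod R) : Prop :=
  ∀ (ι : Type), IsIso (Sigma.desc
    (fun i : ι => (extFun R n M).map (Sigma.ι (fun _ : ι => regR R) i)))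

/-- A module `K` is small iff `Hom_R(K,-)` commutes with direct sums. -/
def IsSmallModule (R : Type) [Ring R] (K : RMod R) : Prop :=
  ∀ (ι : Type), PreservesColimitsOfShape (Discrete ι) (preadditiveCoyoneda.obj (op K))

/-- `M` has a short exact sequence `0 → K → P → M → 0` with `P` projective and `K`
satisfying the property `Q` (e.g. `M` is fp-Ω¹, fg-Ω¹ or small-Ω¹). -/
def IsOmega1 (R : Type) [Ring R] (Q : RMod R → Prop) (M : RMod R) : Prop :=
  ∃ (K P : RMod R) (i : K ⟶ P) (p : P ⟶ M) (w : i ≫ p = 0),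
    Mono i ∧ Epi p ∧ (ShortComplex.mk i p w).Exact ∧ Projective P ∧ Q K

/-- `M` has projective dimension at most 1. -/
def HasProjDimLE1 (R : Type) [Ring R] (M : RMod R) : Prop :=
  ∃ (P₁ P₀ : RMod R) (f : P₁ ⟶ P₀) (p : P₀ ⟶ M) (w : f ≫ p = 0),
    Projective P₁ ∧ Projective P₀ ∧ Mono f ∧ Epi p ∧ (ShortComplex.mk f p w).Exact

/-- `M` is `FP₂`: it admits a projective resolution which is finitely generated in
dimensions `0`, `1` and `2`. -/
def IsFP2 (R : Type) [Ring R] (M : RMod R) : Prop :=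
  ∃ (P₂ P₁ P₀ : RMod R) (d₂ : P₂ ⟶ P₁) (d₁ : P₁ ⟶ P₀) (p : P₀ ⟶ M)
    (w₂ : d₂ ≫ d₁ = 0) (w₁ : d₁ ≫ p = 0),
    Projective P₂ ∧ Projective P₁ ∧ Projective P₀ ∧
    Module.Finite Rᵐᵒᵖ P₂ ∧ Module.Finite Rᵐᵒᵖ P₁ ∧ Module.Finite Rᵐᵒᵖ P₀ ∧
    Epi p ∧ (ShortComplex.mk d₂ d₁ w₂).Exact ∧ (ShortComplex.mk d₁ p w₁).Exact

/-- `M` has injective dimension at most `n`, i.e. `Ext^k(-,M)` vanishes for `k > n`. -/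
def HasInjDimLE (R : Type) [Ring R] (n : ℕ) (M : RMod R) : Prop :=
  ∀ (k : ℕ), n < k → ∀ (N : RMod R), IsZero (((Ext ℤ (RMod R) k).obj (op N)).obj M)

namespace CategoryTheory.ShortComplex

open ZeroObject

variable {A : Type*} [Category* A] [Abelian A]

/-- The chain complex `⋯ ⟶ 0 ⟶ S.X₁ ⟶ S.X₂` with `S.X₂` in degree `0`. -/
def toTwoTermComplex (S : ShortComplex A) : ChainComplex A ℕ where
  X
    | 0 => S.X₂
    | 1 => S.X₁
    | _ + 2 => 0
  d
    | 1, 0 => S.f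
    | 0, _ => 0
    | 1, _ + 1 => 0
    | _ + 2, _ => 0
  shape i j h := by
    match i, j with
    | 1, 0 => exact absurd rfl h
    | 0, _ => rfl
    | 1, _ + 1 => rfl
    | _ + 2, _ => rfl
  d_comp_d' i j k _ _ := by
    match i, j with
    | 1, 0 => exact comp_zero
    | 0, _ => exact zero_comp
    | 1, _ + 1 => exact zero_comp
    | _ + 2, _ => exact zero_comp

lemma isZero_toTwoTermComplex_X (S : ShortComplex A) (n : ℕ) :
    IsZero (S.toTwoTermComplex.X (n + 2)) :=
  isZero_zero A

/-- The map of two-term complexes induced by a commutative square. -/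
def toTwoTermComplexMap {S T : ShortComplex A} (φ : S ⟶ T) :
    S.toTwoTermComplex ⟶ T.toTwoTermComplex where
  f
    | 0 => φ.τ₂
    | 1 => φ.τ₁
    | _ + 2 => 0
  comm' i j _ := by
    match i, j with
    | 1, 0 => exact φ.comm₁₂
    | 0, _ => exact comp_zero.trans zero_comp.symm
    | 1, _ + 1 => exact comp_zero.trans zero_comp.symm
    | _ + 2, _ => exact (S.isZero_toTwoTermComplex_X _).eq_of_src _ _

lemma toTwoTermComplex_exactAt_succ {S : ShortComplex A} (hS : S.ShortExact) (n : ℕ) :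
    S.toTwoTermComplex.ExactAt (n + 1) := by
  rw [HomologicalComplex.exactAt_iff' _ (n + 1 + 1) (n + 1) n (by simp) (by simp)]
  match n with
  | 0 =>
    have := hS.mono_f
    exact (ShortComplex.exact_iff_mono _ rfl).2 this
  | n + 1 => exact ShortComplex.exact_of_isZero_X₂ _ (S.isZero_toTwoTermComplex_X n)

/-- A short exact sequence whose first two objects are projective is a projective resolution
of its third object. -/
def ShortExact.projectiveResolution {S : ShortComplex A} (hS : S.ShortExact)
    (h₁ : Projective S.X₁) (h₂ : Projective S.X₂) : ProjectiveResolution S.X₃ where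
  complex := S.toTwoTermComplex
  projective n := by
    match n with
    | 0 => exact h₂
    | 1 => exact h₁
    | _ + 2 => exact (isZero_zero A).projective
  π := (ChainComplex.toSingle₀Equiv _ _).symm ⟨S.g, S.zero⟩
  quasiIso := ⟨fun n => by
    cases n
    · rw [ChainComplex.quasiIsoAt₀_iff, ShortComplex.quasiIso_iff_of_zeros']
      · refine (ShortComplex.exact_and_epi_g_iff_of_iso ?_).2 ⟨hS.exact, hS.epi_g⟩
        exact ShortComplex.isoMk (Iso.refl _) (Iso.refl _) (Iso.refl _)
          ((Category.id_comp _).trans (Category.comp_id _).symm)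
          (by
            refine (Category.id_comp S.g).trans (Eq.trans ?_ (Category.comp_id _).symm)
            exact (ChainComplex.toSingle₀Equiv_symm_apply_f_zero
              (C := S.toTwoTermComplex) S.g S.zero).symm)
      all_goals rfl
    · rw [quasiIsoAt_iff_exactAt']
      · exact toTwoTermComplex_exactAt_succ hS _
      · apply ChainComplex.exactAt_succ_single_obj⟩

end CategoryTheory.ShortComplex

/-- A chain map which is a monomorphism in degree `n` induces a monomorphism on homology in
degree `n` if the objects of degree `n + 1` are zero. -/
lemma mono_homologyMap_of_isZero {A : Type*} [Category* A] [Abelian A]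
    {K L : ChainComplex A ℕ} (φ : K ⟶ L) (n : ℕ) (hK : IsZero (K.X (n + 1)))
    (hL : IsZero (L.X (n + 1))) [Mono (φ.f n)] :
    Mono (HomologicalComplex.homologyMap φ n) := by
  have := K.isIso_homologyπ (n + 1) n (by simp) (hK.eq_of_src _ _)
  have := L.isIso_homologyπ (n + 1) n (by simp) (hL.eq_of_src _ _)
  have : Mono (HomologicalComplex.cyclesMap φ n) := by
    have : Mono (HomologicalComplex.cyclesMap φ n ≫ L.iCycles n) := by
      rw [HomologicalComplex.cyclesMap_i]
      infer_instance
    exact mono_of_mono _ (L.iCycles n)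
  have h : HomologicalComplex.homologyMap φ n =
      inv (K.homologyπ n) ≫ HomologicalComplex.cyclesMap φ n ≫ L.homologyπ n := by
    rw [← HomologicalComplex.homologyπ_naturality, IsIso.inv_hom_id_assoc]
  rw [h]
  infer_instance

section Ext

variable {A : Type*} [Category* A] [Abelian A] [EnoughProjectives A] [Linear ℤ A]

/-- A morphism of length one projective resolutions which is an isomorphism in degree `1` induces
epimorphisms on `Ext¹`. -/
lemma epi_ext_one_map {S T : ShortComplex A} (hS : S.ShortExact) (hT : T.ShortExact)
    (hS₁ : Projective S.X₁) (hS₂ : Projective S.X₂)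
    (hT₁ : Projective T.X₁) (hT₂ : Projective T.X₂)
    (φ : S ⟶ T) [IsIso φ.τ₁] (Y : A) :
    Epi (((Ext ℤ A 1).map φ.τ₃.op).app Y) := by
  let P := hS.projectiveResolution hS₁ hS₂
  let Q := hT.projectiveResolution hT₁ hT₂
  let F := ((linearYoneda ℤ A).obj Y).rightOp
  let ψ : P.complex ⟶ Q.complex := ShortComplex.toTwoTermComplexMap φ
  have comm : ψ.f 0 ≫ Q.π.f 0 = P.π.f 0 ≫ φ.τ₃ := by
    have hP : P.π.f 0 = S.g :=
      ChainComplex.toSingle₀Equiv_symm_apply_f_zero (C := S.toTwoTermComplex) S.g S.zero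
    have hQ : Q.π.f 0 = T.g :=
      ChainComplex.toSingle₀Equiv_symm_apply_f_zero (C := T.toTwoTermComplex) T.g T.zero
    rw [hP, hQ]
    exact φ.comm₂₃
  have nat := ProjectiveResolution.isoLeftDerivedObj_hom_naturality φ.τ₃ P Q ψ comm F 1
  have : IsIso (ψ.f 1) := ‹IsIso φ.τ₁›
  have : Mono (((F.mapHomologicalComplex _).map ψ).f 1) :=
    inferInstanceAs (Mono (F.map (ψ.f 1)))
  have : Mono ((F.mapHomologicalComplex (ComplexShape.down ℕ) ⋙
      HomologicalComplex.homologyFunctor _ _ 1).map ψ) :=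
    mono_homologyMap_of_isZero _ 1
      (F.map_isZero (S.isZero_toTwoTermComplex_X 0))
      (F.map_isZero (T.isZero_toTwoTermComplex_X 0))
  have : Mono ((F.leftDerived 1).map φ.τ₃) := by
    have : Mono ((F.leftDerived 1).map φ.τ₃ ≫ (Q.isoLeftDerivedObj F 1).hom) := by
      rw [nat]
      infer_instance
    exact mono_of_mono _ (Q.isoLeftDerivedObj F 1).hom
  exact inferInstanceAs (Epi ((F.leftDerived 1).map φ.τ₃).unop)

/-- If `Ext¹(S.X₃, Y) = 0` then every morphism `S.X₁ ⟶ Y` extends along `S.f`. -/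
lemma exists_extension_of_isZero_ext_one {S : ShortComplex A} (hS : S.ShortExact)
    (h₁ : Projective S.X₁) (h₂ : Projective S.X₂) {Y : A}
    (hY : IsZero (((Ext ℤ A 1).obj (op S.X₃)).obj Y)) (x : S.X₁ ⟶ Y) :
    ∃ y : S.X₂ ⟶ Y, S.f ≫ y = x := by
  let P := hS.projectiveResolution h₁ h₂
  have h := hY.of_iso (P.isoExt (R := ℤ) 1 Y).symm
  rw [← HomologicalComplex.exactAt_iff_isZero_homology,
    HomologicalComplex.exactAt_iff' _ 0 1 2 (by simp) (by simp),
    ShortComplex.moduleCat_exact_iff] at h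
  exact h x ((S.isZero_toTwoTermComplex_X 0).eq_of_src _ _)

end Ext

/-- Given a length one projective resolution `T` of `M` and an extension `C` of `M` by a projective
object `K`, there is a length one projective resolution of `C` mapping to `T`. -/
lemma exists_resolution_of_extension {A : Type*} [Category* A] [Abelian A]
    {T : ShortComplex A} (hT : T.ShortExact) (hT₂ : Projective T.X₂)
    {K C : A} (hK : Projective K) (f : K ⟶ C) (g : C ⟶ T.X₃) (w : f ≫ g = 0)
    (hfg : (ShortComplex.mk f g w).ShortExact) :
    ∃ (Q : A) (i : T.X₁ ⟶ Q) (p : Q ⟶ C) (q : Q ⟶ T.X₂) (w' : i ≫ p = 0),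
      Projective Q ∧ (ShortComplex.mk i p w').ShortExact ∧ i ≫ q = T.f ∧ q ≫ T.g = p ≫ g := by
  have := hfg.mono_f
  have := hfg.epi_g
  have := hT.mono_f
  have := hT.epi_g
  dsimp only at *
  let s : T.X₂ ⟶ C := Projective.factorThru T.g g
  have hs : s ≫ g = T.g := Projective.factorThru_comp _ _
  have hts : (T.f ≫ s) ≫ g = 0 := by rw [Category.assoc, hs, T.zero]
  let t : T.X₁ ⟶ K := hfg.exact.lift (T.f ≫ s) hts
  have ht : t ≫ f = T.f ≫ s := hfg.exact.lift_f _ _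
  have w' : biprod.lift (-t) T.f ≫ biprod.desc f s = 0 := by simp [ht]
  have hi : Mono (biprod.lift (-t) T.f) := by
    have : Mono (biprod.lift (-t) T.f ≫ biprod.snd) := by
      rw [biprod.lift_snd]
      infer_instance
    exact mono_of_mono _ biprod.snd
  refine ⟨K ⊞ T.X₂, biprod.lift (-t) T.f, biprod.desc f s, biprod.snd, w', inferInstance,
    ShortComplex.ShortExact.mk' ?_ hi ?_, biprod.lift_snd _ _, ?_⟩
  · refine ShortComplex.exact_of_f_is_kernel _ (KernelFork.IsLimit.ofι' _ _ fun {Z} x hx => ?_)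
    have hx' : x ≫ biprod.fst ≫ f + x ≫ biprod.snd ≫ s = 0 := by
      rw [← hx]
      dsimp only
      rw [biprod.desc_eq, Preadditive.comp_add]
    have hx₂ : (x ≫ biprod.snd) ≫ T.g = 0 := by
      have := congr($hx' ≫ g)
      simpa [w, hs] using this
    refine ⟨hT.exact.lift (x ≫ biprod.snd) hx₂, ?_⟩
    have hc := hT.exact.lift_f (x ≫ biprod.snd) hx₂
    ext
    · rw [← cancel_mono f]
      simp only [Category.assoc, biprod.lift_fst, Preadditive.neg_comp, Preadditive.comp_neg, ht]
      rw [reassoc_of% hc, eq_comm]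
      exact eq_neg_of_add_eq_zero_left hx'
    · simp [hc]
  · rw [Preadditive.epi_iff_cancel_zero]
    intro Z z hz
    have h₁ : f ≫ z = 0 := by simpa using congr(biprod.inl ≫ $hz)
    have h₂ : s ≫ z = 0 := by simpa using congr(biprod.inr ≫ $hz)
    have hd : g ≫ hfg.exact.desc z h₁ = z := hfg.exact.g_desc z h₁
    have : T.g ≫ hfg.exact.desc z h₁ = 0 := by rw [← hs, Category.assoc, hd, h₂]
    rw [← hd, zero_of_epi_comp _ this, comp_zero]
  · ext <;> simp [w, hs]

/-- Every right module is a quotient of a coproduct of copies of `R`. -/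
lemma exists_epi_sigma_regR (R : Type) [Ring R] (N : RMod R) :
    ∃ π : (∐ fun _ : N => regR R) ⟶ N, Epi π := by
  let u (x : N) : regR R ⟶ N := ModuleCat.ofHom
    { toFun := fun r => MulOpposite.op r • x
      map_add' := fun r s => by rw [MulOpposite.op_add, add_smul]
      map_smul' := fun c r => by
        rw [RingHom.id_apply, smul_smul]
        rfl }
  refine ⟨Sigma.desc u, (ModuleCat.epi_iff_surjective _).2 fun x => ⟨Sigma.ι (fun _ : N => regR R) x (1 : R), ?_⟩⟩
  have : (Sigma.ι (fun _ : N => regR R) x ≫ Sigma.desc u) (1 : R) = u x (1 : R) := by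
    rw [Sigma.ι_desc]
  exact this.trans (one_smul _ x)

/-- `Rⁿ` is a projective right module. -/
lemma projective_pi_regR (R : Type) [Ring R] (n : ℕ) :
    Projective (ModuleCat.of Rᵐᵒᵖ (Fin n → R)) :=
  (IsProjective.iff_projective _).1 <|
    let e : Rᵐᵒᵖ ≃ₗ[Rᵐᵒᵖ] R :=
      { MulOpposite.opAddEquiv.symm with map_smul' := fun _ _ => rfl }
    have : Module.Free Rᵐᵒᵖ R := .of_equiv e
    inferInstance

theorem ext1_vanishing_on_free_modules (R : Type) [Ring R] (M : RMod R)
    (hpd : HasProjDimLE1 R M) (hc : CommutesWithSumsOfR R 1 M)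
    (n : ℕ) (C : RMod R) (f : ModuleCat.of Rᵐᵒᵖ (Fin n → R) ⟶ C) (g : C ⟶ M)
    (w : f ≫ g = 0) (hf : Mono f) (hg : Epi g) (hex : (ShortComplex.mk f g w).Exact)
    (h0 : IsZero ((extFun R 1 C).obj (regR R))) :
    (∀ (ι : Type), IsZero ((extFun R 1 C).obj (∐ (fun _ : ι => regR R)))) ∧
      Projective C := by
  have hRn := projective_pi_regR R n
  obtain ⟨P₁, P₀, d, p, wT, hP₁, hP₀, hd, hp, hT⟩ := hpd
  have hT' : (ShortComplex.mk d p wT).ShortExact := .mk' hT hd hp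
  obtain ⟨Q, i, r, q, wQ, hQ, hS, hiq, hqp⟩ :=
    exists_resolution_of_extension hT' hP₀ hRn f g w (.mk' hex hf hg)
  let φ : ShortComplex.mk i r wQ ⟶ ShortComplex.mk d p wT :=
    { τ₁ := 𝟙 _, τ₂ := q, τ₃ := g, comm₁₂ := by simp [hiq], comm₂₃ := hqp }
  have : IsIso φ.τ₁ := inferInstanceAs (IsIso (𝟙 P₁))
  have hfree (ι : Type) : IsZero ((extFun R 1 C).obj (∐ fun _ : ι => regR R)) := by
    have hepi : Epi (((Ext ℤ (RMod R) 1).map g.op).app (∐ fun _ : ι => regR R)) :=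
      epi_ext_one_map hS hT' hP₁ hQ hP₁ hP₀ φ _
    have := hc ι
    refine IsZero.of_epi_eq_zero (Sigma.desc
      (fun i : ι => (extFun R 1 M).map (Sigma.ι (fun _ : ι => regR R) i)) ≫
        ((Ext ℤ (RMod R) 1).map g.op).app (∐ fun _ : ι => regR R)) (Sigma.hom_ext _ _ fun i => ?_)
    rw [Sigma.ι_desc_assoc, NatTrans.naturality, comp_zero, h0.eq_zero_of_tgt (((Ext ℤ (RMod R) 1).map g.op).app (regR R)), zero_comp]
  refine ⟨hfree, ?_⟩
  obtain ⟨π, hπ⟩ := exists_epi_sigma_regR R P₁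
  have hext : IsZero ((extFun R 1 C).obj P₁) := by
    have h : (extFun R 1 C).map (Projective.factorThru (𝟙 P₁) π) ≫ (extFun R 1 C).map π = 𝟙 _ := by
      rw [← Functor.map_comp, Projective.factorThru_comp, CategoryTheory.Functor.map_id]
    rw [IsZero.iff_id_eq_zero, ← h, (hfree P₁).eq_zero_of_tgt ((extFun R 1 C).map _), zero_comp]
  obtain ⟨y, hy⟩ := exists_extension_of_isZero_ext_one hS hP₁ hQ hext (𝟙 P₁)
  let σ := ShortComplex.Splitting.ofExactOfRetraction _ hS.exact y hy hS.epi_g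
  exact Retract.projective ⟨σ.s, r, σ.s_g⟩
end
end

section
/- Let R be a right hereditary ring and M a right R-module. The following are equivalent: (1) Ext¹_R(M, −) commutes with direct limits; (2) Ext¹_R(M, −) commutes with direct sums; (3) Ext¹_R(M, −) commutes with direct sums of copies of R; (4) M = N ⊕ P where N is finitely presented and P is projective. -/
open CategoryTheory CategoryTheory.Limits Opposite

noncomputable section

namespace CategoryTheory
variable {C : Type*} [Category* C] [Abelian C]

section TwoTerm
variable {K F M : C} (i : K ⟶ F) {p : F ⟶ M} (w : i ≫ p = 0)

open scoped ZeroObject in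
/-- The objects of the complex `0 ⟶ K ⟶ F`. -/
def twoTermX (K F : C) : ℕ → C
  | 0 => F
  | 1 => K
  | _ + 2 => 0

/-- The differentials of the complex `0 ⟶ K ⟶ F`. -/
def twoTermD : ∀ n, twoTermX K F (n + 1) ⟶ twoTermX K F n
  | 0 => i
  | _ + 1 => 0

/-- The complex `0 ⟶ K ⟶ F`, with `F` in degree `0`. -/
def twoTerm : ChainComplex C ℕ :=
  ChainComplex.of (twoTermX K F) (twoTermD i) (fun n => by
    cases n <;> exact zero_comp)

lemma twoTerm_d : (twoTerm i).d 1 0 = i :=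
  ChainComplex.of_d (twoTermX K F) (twoTermD i) 0

lemma isZero_twoTerm_X (n : ℕ) : IsZero ((twoTerm i).X (n + 2)) := isZero_zero C

variable {i} in
/-- The augmentation of the complex `0 ⟶ K ⟶ F`. -/
def twoTermπ : twoTerm i ⟶ (ChainComplex.single₀ C).obj M :=
  (ChainComplex.toSingle₀Equiv _ _).symm ⟨p, (congrArg (· ≫ p) (twoTerm_d i)).trans w⟩

/-- The projective resolution attached to a short exact sequence `0 ⟶ K ⟶ F ⟶ M ⟶ 0` with
`K` and `F` projective. -/
def twoTermResolution [Projective K] [Projective F] [Mono i] [Epi p]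
    (ex : (ShortComplex.mk i p w).Exact) : ProjectiveResolution M where
  complex := twoTerm i
  projective n := by
    obtain (_ | _ | n) := n
    · exact ‹Projective F›
    · exact ‹Projective K›
    · exact (isZero_twoTerm_X i n).projective
  π := twoTermπ w
  quasiIso := ⟨fun n => by
    cases n with
    | zero =>
      rw [ChainComplex.quasiIsoAt₀_iff, ShortComplex.quasiIso_iff_of_zeros']
      · refine (ShortComplex.exact_and_epi_g_iff_of_iso ?_).2
          ⟨ex, ‹Epi p›⟩
        refine ShortComplex.isoMk (Iso.refl _) (Iso.refl _) (Iso.refl _)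
          ?_ ?_
        · exact (Category.id_comp i).trans
            ((twoTerm_d i).symm.trans (Category.comp_id ((twoTerm i).d 1 0)).symm)
        · exact (Category.id_comp p).trans
            ((ChainComplex.toSingle₀Equiv_symm_apply_f_zero (C := twoTerm i) (X := M) p
              ((congrArg (· ≫ p) (twoTerm_d i)).trans w)).symm.trans
              (Category.comp_id ((twoTermπ w).f 0)).symm)
      all_goals rfl
    | succ n =>
      rw [quasiIsoAt_iff_exactAt']
      · rw [HomologicalComplex.exactAt_iff' _ (n + 2) (n + 1) n (by simp) (by simp)]
        cases n with
        | zero =>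
          refine (ShortComplex.exact_iff_mono _ ((isZero_twoTerm_X i 0).eq_of_src _ _)).2 ?_
          change Mono ((twoTerm i).d 1 0)
          rw [twoTerm_d]; exact ‹Mono i›
        | succ n => exact ShortComplex.exact_of_isZero_X₂ _ (isZero_twoTerm_X i n)
      · apply ChainComplex.exactAt_succ_single_obj⟩

end TwoTerm

section
variable {D : Type*} [Category* D] [Abelian D]

lemma isIso_homologyπ_of_isZero (L : ChainComplex D ℕ) (h : IsZero (L.X 2)) :
    IsIso (L.homologyπ 1) :=
  L.isIso_homologyπ 2 1 (by simp) (h.eq_of_src _ _)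

variable (L : ChainComplex D ℕ) (h : IsZero (L.X 2))

/-- The inclusion of `H₁` in the chains of degree `1`, for a complex vanishing in degree `2`. -/
def homologyOneι : L.homology 1 ⟶ L.X 1 :=
  (L.isoHomologyπ 2 1 (by simp) (h.eq_of_src _ _)).inv ≫ L.iCycles 1

lemma homologyπ_homologyOneι : L.homologyπ 1 ≫ homologyOneι L h = L.iCycles 1 := by
  have := isIso_homologyπ_of_isZero L h
  simp [homologyOneι]

instance : Mono (homologyOneι L h) := by
  have := isIso_homologyπ_of_isZero L h
  exact mono_comp _ _

lemma homologyOneι_comp_d : homologyOneι L h ≫ L.d 1 0 = 0 := by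
  simp [homologyOneι]

lemma homologyOneι_exact :
    (ShortComplex.mk (homologyOneι L h) (L.d 1 0) (homologyOneι_comp_d L h)).Exact := by
  have := isIso_homologyπ_of_isZero L h
  refine ShortComplex.exact_of_f_is_kernel _ ?_
  refine IsLimit.ofIsoLimit (L.cyclesIsKernel 1 0 (by simp)) ?_
  exact Fork.ext (asIso (L.homologyπ 1)) (homologyπ_homologyOneι L h)

lemma homologyOneι_naturality {L L' : ChainComplex D ℕ} (φ : L ⟶ L') (h : IsZero (L.X 2))
    (h' : IsZero (L'.X 2)) :
    HomologicalComplex.homologyMap φ 1 ≫ homologyOneι L' h' = homologyOneι L h ≫ φ.f 1 := by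
  have := isIso_homologyπ_of_isZero L h
  rw [← cancel_epi (L.homologyπ 1), HomologicalComplex.homologyπ_naturality_assoc,
    homologyπ_homologyOneι, HomologicalComplex.cyclesMap_i, ← homologyπ_homologyOneι L h,
    Category.assoc]

end

variable (A : Type*) [Ring A] [Linear A C] [EnoughProjectives C]
variable {K F M : C} {i : K ⟶ F} {p : F ⟶ M} {w : i ≫ p = 0}

/-- A short exact sequence `0 ⟶ K ⟶ F ⟶ M ⟶ 0` with `K` and `F` projective presents `Ext¹(M, Y)` as
the cokernel of `Hom(F, Y) ⟶ Hom(K, Y)`, naturally in `Y`. -/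
theorem exists_ext_presentation [Projective K] [Projective F] [Mono i] [Epi p]
    (ex : (ShortComplex.mk i p w).Exact) :
    ∃ q : ∀ Y : C, (K ⟶ Y) →+ ((Ext A C 1).obj (op M)).obj Y,
      (∀ Y, Function.Surjective (q Y)) ∧
      (∀ {Y Z : C} (g : Y ⟶ Z) (f : K ⟶ Y),
        (((Ext A C 1).obj (op M)).map g).hom (q Y f) = q Z (f ≫ g)) ∧
      (∀ (Y : C) (f : K ⟶ Y), q Y f = 0 ↔ ∃ g : F ⟶ Y, i ≫ g = f) := by
  let P := twoTermResolution i w ex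
  let G : C → C ⥤ (ModuleCat A)ᵒᵖ := fun Y => ((linearYoneda A C).obj Y).rightOp
  let L := fun Y =>
    ((G Y).mapHomologicalComplex _).obj P.complex
  have hL : ∀ Y, IsZero ((L Y).X 2) := fun Y => (G Y).map_isZero (isZero_twoTerm_X i 0)
  let e : ∀ Y, ((G Y).leftDerived 1).obj M ≅ (L Y).homology 1 := fun Y => P.isoLeftDerivedObj (G Y) 1
  let m : ∀ Y, ((G Y).leftDerived 1).obj M ⟶ (L Y).X 1 := fun Y =>
    (e Y).hom ≫ homologyOneι (L Y) (hL Y)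
  have hm0 : ∀ Y, m Y ≫ (L Y).d 1 0 = 0 := fun Y => by simp [m, homologyOneι_comp_d]
  have hmono : ∀ Y, Mono (m Y) := fun Y => by dsimp only [m]; infer_instance
  have hex : ∀ Y, (ShortComplex.mk (m Y) ((L Y).d 1 0) (hm0 Y)).Exact := fun Y =>
    (ShortComplex.exact_iff_of_iso (S₁ := .mk (m Y) _ (hm0 Y)) (S₂ := .mk _ _
      (homologyOneι_comp_d (L Y) (hL Y))) (ShortComplex.isoMk (e Y) (Iso.refl _) (Iso.refl _)
      (by simp [m]) (by simp))).2 (homologyOneι_exact (L Y) (hL Y))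
  have hnat : ∀ {Y Z : C} (g : Y ⟶ Z), (m Y).unop ≫ ((Ext A C 1).obj (op M)).map g =
      ((linearYoneda A C).map g).app (op K) ≫ (m Z).unop := fun {Y Z} g => by
    let α : G Z ⟶ G Y := NatTrans.rightOp ((linearYoneda A C).map g)
    have h : (NatTrans.leftDerived α 1).app M ≫ m Y = m Z ≫ α.app K := by
      rw [P.leftDerived_app_eq]
      let ψ : L Z ⟶ L Y := (NatTrans.mapHomologicalComplex α _).app P.complex
      change ((e Z).hom ≫ HomologicalComplex.homologyMap ψ 1 ≫ (e Y).inv) ≫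
        (e Y).hom ≫ homologyOneι (L Y) (hL Y) = ((e Z).hom ≫ homologyOneι (L Z) (hL Z)) ≫ ψ.f 1
      rw [Category.assoc, Category.assoc, Iso.inv_hom_id_assoc,
        homologyOneι_naturality ψ (hL Z) (hL Y), Category.assoc]
    exact congrArg Quiver.Hom.unop h
  refine ⟨fun Y => (m Y).unop.hom.toAddMonoidHom, fun Y => ?_, fun {Y Z} g f => ?_, fun Y f => ?_⟩
  · exact (ModuleCat.epi_iff_surjective _).1 (inferInstance : Epi (m Y).unop)
  · exact congr($(hnat g).hom f)
  · have h := ((hex Y).unop).moduleCat_range_eq_ker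
    refine (SetLike.ext_iff.1 h f).symm.trans (exists_congr fun g => ?_)
    change ((twoTerm i).d 1 0 ≫ g : K ⟶ Y) = f ↔ _
    rw [twoTerm_d]
    exact Iff.rfl

end CategoryTheory

section Hereditary
universe u
variable {S : Type u} [Ring S]

/-- Over a hereditary ring, quotients of injective modules are injective. -/
lemma Module.Injective.quotient_of_hereditary (h : ∀ I : Ideal S, Module.Projective S I)
    {E : Type u} [AddCommGroup E] [Module S E] [Module.Injective S E] (X : Submodule S E) :
    Module.Injective S (E ⧸ X) := by
  refine Module.Baer.injective fun I g => ?_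
  have := h I
  obtain ⟨f, hf⟩ := Module.projective_lifting_property X.mkQ g X.mkQ_surjective
  obtain ⟨f', hf'⟩ := Module.Baer.of_injective ‹Module.Injective S E› I f
  exact ⟨X.mkQ ∘ₗ f', fun x hx => by
    rw [LinearMap.comp_apply, hf' x hx, ← hf, LinearMap.comp_apply]⟩

/-- Over a hereditary ring, submodules of projective modules are projective. -/
lemma Module.Projective.submodule_of_hereditary (h : ∀ I : Ideal S, Module.Projective S I)
    {P : Type u} [AddCommGroup P] [Module S P] [Module.Projective S P] (N : Submodule S P) :
    Module.Projective S N := by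
  refine Module.Projective.of_lifting_property'' fun f hf => ?_
  let ι := Injective.under (ModuleCat.of S (N →₀ S))
  have : Module.Injective S ι := Module.injective_module_of_injective_object S ι
    (inj := (inferInstance : CategoryTheory.Injective ι))
  let e : (N →₀ S) →ₗ[S] ι := (Injective.ι (ModuleCat.of S (N →₀ S))).hom
  have he : Function.Injective e := (ModuleCat.mono_iff_injective _).1 inferInstance
  let X := (LinearMap.ker f).map e
  have := Module.Injective.quotient_of_hereditary h X
  let g : N →ₗ[S] ι ⧸ X :=
    ((LinearMap.ker f).mapQ X e (Submodule.le_comap_map _ _)) ∘ₗ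
      (f.quotKerEquivOfSurjective hf).symm
  have hg : ∀ b, g (f b) = X.mkQ (e b) := fun b => by
    have : (f.quotKerEquivOfSurjective hf).symm (f b) = Submodule.Quotient.mk b := by
      rw [LinearEquiv.symm_apply_eq]; rfl
    simp [g, this]
  obtain ⟨g', hg'⟩ := Module.Injective.extension_property S (ι ⧸ X) N P N.subtype
    N.injective_subtype g
  obtain ⟨k, hk⟩ := Module.projective_lifting_property X.mkQ g' X.mkQ_surjective
  have hmem : ∀ n : N, k n ∈ LinearMap.range e := fun n => by
    obtain ⟨b, rfl⟩ := hf n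
    have h1 : X.mkQ (k (f b)) = X.mkQ (e b) := by
      rw [← hg b, ← hg', LinearMap.comp_apply, ← hk]; rfl
    rw [Submodule.mkQ_apply, Submodule.mkQ_apply, Submodule.Quotient.eq] at h1
    obtain ⟨c, -, hc⟩ := h1
    exact ⟨c + b, by rw [map_add, hc, sub_add_cancel]⟩
  let e' := LinearEquiv.ofInjective e he
  let l : N →ₗ[S] (N →₀ S) := e'.symm ∘ₗ (k ∘ₗ N.subtype).codRestrict _ hmem
  have hl : ∀ n, e (l n) = k n := fun n => by
    have : e' (l n) = ⟨k n, hmem n⟩ := by simp only [l, LinearMap.comp_apply,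
      LinearEquiv.coe_coe, LinearEquiv.apply_symm_apply]; rfl
    exact congrArg Subtype.val this
  refine ⟨l, LinearMap.ext fun n => ?_⟩
  obtain ⟨b, rfl⟩ := hf n
  have h1 : X.mkQ (e (l (f b))) = X.mkQ (e b) := by
    rw [hl, ← hg b, ← hg', LinearMap.comp_apply, ← hk]; rfl
  rw [Submodule.mkQ_apply, Submodule.mkQ_apply, Submodule.Quotient.eq] at h1
  obtain ⟨c, hc, hc'⟩ := h1
  rw [← map_sub] at hc'
  have := he hc'
  rw [this, SetLike.mem_coe, LinearMap.mem_ker, map_sub, sub_eq_zero] at hc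
  exact hc

/-- A homomorphism `s` from a finitely generated module has finitely generated kernel as soon as
some endomorphism over `s` maps the kernel into a finitely generated submodule of the kernel. -/
lemma fg_ker_of_endomorphism {T N : Type u} [AddCommGroup T] [Module S T] [Module.Finite S T]
    [AddCommGroup N] [Module S N] (s : T →ₗ[S] N) (θ : T →ₗ[S] T) (L : Submodule S T)
    (hL : L.FG) (hLs : L ≤ LinearMap.ker s) (hs : ∀ a, s (θ a) = s a)
    (hθ : ∀ a ∈ LinearMap.ker s, θ a ∈ L) : (LinearMap.ker s).FG := by
  have : LinearMap.ker s = L ⊔ LinearMap.range (LinearMap.id - θ) := by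
    refine le_antisymm (fun a ha => ?_) (sup_le hLs ?_)
    · exact Submodule.mem_sup.2 ⟨θ a, hθ a ha, _, ⟨a, rfl⟩, by simp⟩
    · rintro _ ⟨a, rfl⟩
      simp [hs]
  rw [this]
  exact hL.sup (Submodule.FG.of_finite)

/-- Let `p : F →ₗ[S] M` be surjective, and let `ψ` be an endomorphism of the projective module `F`
over `M` which maps the kernel of `p` into a finitely generated submodule `L` of the kernel. If
`L` is contained in a finitely generated submodule `T` such that `F ⧸ T` embeds in a projective
module, then `M` is the direct sum of a finitely presented module and a projective module. -/
lemma exists_finitePresentation_isCompl_projective_of_le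
    (h : ∀ I : Ideal S, Module.Projective S I) {F G M : Type u} [AddCommGroup M] [Module S M]
    [AddCommGroup F] [Module S F] [Module.Projective S F]
    [AddCommGroup G] [Module S G] [Module.Projective S G]
    (p : F →ₗ[S] M) (hp : Function.Surjective p) (ψ : F →ₗ[S] F)
    (hψ : ∀ x, p (ψ x) = p x) (L : Submodule S F) (hL : L.FG)
    (hLp : L ≤ LinearMap.ker p) (hψL : ∀ x ∈ LinearMap.ker p, ψ x ∈ L)
    (T : Submodule S F) [Module.Finite S T] (hA : L ≤ T)
    (π : F →ₗ[S] G) (hπ : ∀ x, π x = 0 ↔ x ∈ T) :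
    ∃ N P : Submodule S M, IsCompl N P ∧ Module.FinitePresentation S N ∧
      Module.Projective S P := by
  have : Module.Projective S T := .submodule_of_hereditary h _
  have := Module.finitePresentation_of_projective S T
  have hker : LinearMap.ker p ≤ LinearMap.ker (π ∘ₗ ψ) := fun x hx =>
    (hπ _).2 (hA (hψL x hx))
  let β : M →ₗ[S] G :=
    ((LinearMap.ker p).liftQ (π ∘ₗ ψ) hker) ∘ₗ (p.quotKerEquivOfSurjective hp).symm
  have hβ : ∀ x, β (p x) = π (ψ x) := fun x => by
    have : (p.quotKerEquivOfSurjective hp).symm (p x) = Submodule.Quotient.mk x := by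
      rw [LinearEquiv.symm_apply_eq]; rfl
    simp [β, this]
  have hβ0 : ∀ x, β (p x) = 0 ↔ ψ x ∈ T := fun x => by rw [hβ, hπ]
  have : Module.Projective S (LinearMap.range β) := .submodule_of_hereditary h _
  obtain ⟨σ, hσ⟩ := Module.projective_lifting_property β.rangeRestrict LinearMap.id
    β.surjective_rangeRestrict
  have hσ' : ∀ y, β.rangeRestrict (σ y) = y := fun y => congr($hσ y)
  let N := LinearMap.ker β
  let r : M →ₗ[S] N := (LinearMap.id - σ ∘ₗ β.rangeRestrict).codRestrict N fun m => by
    have := congrArg Subtype.val (hσ' (β.rangeRestrict m))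
    simp only [N, LinearMap.mem_ker, LinearMap.sub_apply, map_sub, sub_eq_zero]
    exact this.symm
  have hr : ∀ n : N, r n = n := fun n => by
    have : β.rangeRestrict n = 0 := Subtype.ext n.2
    ext
    simp [r, this]
  have hcompl : IsCompl N (LinearMap.ker r) := LinearMap.isCompl_of_proj hr
  refine ⟨N, LinearMap.ker r, hcompl, ?_, ?_⟩
  · let s : T →ₗ[S] N := r ∘ₗ p ∘ₗ T.subtype
    obtain ⟨ρ, hρ⟩ := Module.projective_lifting_property p (N.subtype ∘ₗ r ∘ₗ p) hp
    have hρ' : ∀ x, p (ρ x) = r (p x) := fun x => congr($hρ x)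
    let θ : T →ₗ[S] T := (ψ ∘ₗ ρ ∘ₗ T.subtype).codRestrict T fun a => by
      refine (hβ0 _).1 ?_
      change β (p (ρ a)) = 0
      rw [hρ']
      exact (r _).2
    refine Module.finitePresentation_of_surjective (M := T) (N := N) s ?_ ?_
    · rintro ⟨m, hm⟩
      obtain ⟨x, rfl⟩ := hp m
      refine ⟨⟨ψ x, (hβ0 x).1 hm⟩, ?_⟩
      simp only [s, LinearMap.comp_apply, T.subtype_apply, hψ]
      exact hr ⟨p x, hm⟩
    · have hLs : L.comap T.subtype ≤ LinearMap.ker s := fun a ha => by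
        have : p a = 0 := hLp ha
        simp [s, this]
      have hs : ∀ a, s (θ a) = s a := fun a => by
        change r (p (ψ (ρ a))) = r (p a)
        rw [hψ, hρ', hr]
      refine fg_ker_of_endomorphism s θ (L.comap T.subtype) ?_ hLs hs fun a ha => hψL _ ?_
      · refine Submodule.fg_of_fg_map_injective T.subtype T.injective_subtype ?_
        rwa [Submodule.map_comap_subtype, inf_eq_right.2 hA]
      · refine (hρ' a).trans ?_
        exact congrArg Subtype.val (show r (p a) = 0 from ha)
  · refine Module.Projective.of_split (P := LinearMap.ker r) (M := LinearMap.range β)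
      (β.rangeRestrict ∘ₗ (LinearMap.ker r).subtype)
      (σ.codRestrict (LinearMap.ker r) fun y => ?_) ?_
    · ext
      simp [r, hσ']
    · ext ⟨x, hx⟩
      have : x - σ (β.rangeRestrict x) = 0 := congrArg Subtype.val hx
      exact (sub_eq_zero.1 this).symm

/-- If the identity of `M` lifts to an endomorphism `ψ` of a free module `X →₀ S` covering `M`
which maps the kernel of the covering into a finitely generated submodule of the kernel, then
`M` is the direct sum of a finitely presented module and a projective module. -/
lemma exists_finitePresentation_isCompl_projective
    (h : ∀ I : Ideal S, Module.Projective S I) {X M : Type u} [AddCommGroup M] [Module S M]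
    (p : (X →₀ S) →ₗ[S] M) (hp : Function.Surjective p) (ψ : (X →₀ S) →ₗ[S] (X →₀ S))
    (hψ : ∀ x, p (ψ x) = p x) (L : Submodule S (X →₀ S)) (hL : L.FG)
    (hLp : L ≤ LinearMap.ker p) (hψL : ∀ x ∈ LinearMap.ker p, ψ x ∈ L) :
    ∃ N P : Submodule S M, IsCompl N P ∧ Module.FinitePresentation S N ∧
      Module.Projective S P := by
  classical
  obtain ⟨A, hA⟩ : ∃ A : Finset X, L ≤ Finsupp.supported S S (A : Set X) := by
    obtain ⟨t, rfl⟩ := hL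
    refine ⟨t.biUnion Finsupp.support, Submodule.span_le.2 fun x hx => ?_⟩
    rw [SetLike.mem_coe, Finsupp.mem_supported]
    exact_mod_cast Finset.subset_biUnion_of_mem Finsupp.support hx
  obtain ⟨T, hT⟩ : ∃ T : Submodule S (X →₀ S), T = Finsupp.supported S S (A : Set X) := ⟨_, rfl⟩
  have eT : T ≃ₗ[S] ((A : Set X) →₀ S) :=
    LinearEquiv.ofEq _ _ hT ≪≫ₗ Finsupp.supportedEquivFinsupp _
  rw [← hT] at hA
  have : Module.Finite S T := Module.Finite.equiv eT.symm
  let π : (X →₀ S) →ₗ[S] (((A : Set X)ᶜ : Set X) →₀ S) := Finsupp.lsubtypeDomain _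
  have hπ : ∀ x, π x = 0 ↔ x ∈ T := fun x => by
    rw [hT, Finsupp.mem_supported', Finsupp.ext_iff]
    simp only [Set.mem_compl_iff, Finset.mem_coe, Subtype.forall]
    exact Iff.rfl
  exact exists_finitePresentation_isCompl_projective_of_le h p hp ψ hψ L hL hLp hψL T hA π hπ

end Hereditary

section Colimits
variable {A : Type} [Ring A] {J : Type} [Preorder J] [IsDirected J (· ≤ ·)] [Nonempty J]
  {D : J ⥤ ModuleCat.{0} A}

/-- A cocone on a directed system of modules is a colimit if it is jointly surjective and every
element which vanishes in the cocone point vanishes at a later stage. -/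
lemma ModuleCat.nonempty_isColimit_of_directed (c : Cocone D)
    (h₁ : ∀ x : c.pt, ∃ j, ∃ y : D.obj j, (c.ι.app j).hom y = x)
    (h₂ : ∀ j, ∀ x : D.obj j, (c.ι.app j).hom x = 0 → ∃ k, ∃ f : j ⟶ k, (D.map f).hom x = 0) :
    Nonempty (IsColimit c) := by
  refine ⟨isColimitOfReflects (forget (ModuleCat.{0} A)) ?_⟩
  refine Types.FilteredColimit.isColimitOf' _ _ (fun x => ?_) (fun j x y hxy => ?_)
  · obtain ⟨j, y, rfl⟩ := h₁ x
    exact ⟨j, y, rfl⟩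
  · have hxy' : (c.ι.app j).hom x = (c.ι.app j).hom y := hxy
    obtain ⟨k, f, hf⟩ := h₂ j ((show D.obj j from x) - (show D.obj j from y))
      (by rw [map_sub, sub_eq_zero]; exact hxy')
    rw [map_sub, sub_eq_zero] at hf
    exact ⟨k, f, hf⟩

lemma ModuleCat.exists_rep_of_isColimit {c : Cocone D} (hc : IsColimit c) (x : c.pt) :
    ∃ j, ∃ y : D.obj j, (c.ι.app j).hom y = x :=
  Concrete.isColimit_exists_rep D hc x

lemma ModuleCat.exists_map_eq_zero_of_isColimit {c : Cocone D} (hc : IsColimit c) {j : J}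
    (x : D.obj j) (hx : (c.ι.app j).hom x = 0) : ∃ k, ∃ f : j ⟶ k, (D.map f).hom x = 0 := by
  obtain ⟨k, f, g, h⟩ := Concrete.isColimit_exists_of_rep_eq D hc x (0 : D.obj j)
    (hx.trans (map_zero (c.ι.app j).hom).symm)
  exact ⟨k, f, h.trans (map_zero (D.map g).hom)⟩

end Colimits

/-- A presentation of a functor `E` on modules as the cokernel of `Hom(F, -) ⟶ Hom(K, -)`. -/
structure FunctorPresentation {A B : Type} [Ring A] [Ring B] (E : ModuleCat.{0} A ⥤ ModuleCat.{0} B)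
    {K F : ModuleCat.{0} A} (i : K ⟶ F) where
  /-- The quotient map. -/
  q : ∀ Y, (K ⟶ Y) →+ E.obj Y
  surjective : ∀ Y, Function.Surjective (q Y)
  map_q : ∀ {Y Z} (g : Y ⟶ Z) (f : K ⟶ Y), (E.map g).hom (q Y f) = q Z (f ≫ g)
  q_eq_zero_iff : ∀ {Y} (f : K ⟶ Y), q Y f = 0 ↔ ∃ g : F ⟶ Y, i ≫ g = f

namespace FunctorPresentation
variable {A B : Type} [Ring A] [Ring B] {E : ModuleCat.{0} A ⥤ ModuleCat.{0} B}
  {K F : ModuleCat.{0} A} {i : K ⟶ F} (Q : FunctorPresentation E i)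

include Q in
lemma map_zero_apply {Y Z : ModuleCat.{0} A} (x : E.obj Y) : (E.map (0 : Y ⟶ Z)).hom x = 0 := by
  obtain ⟨f, rfl⟩ := Q.surjective _ x
  rw [Q.map_q, comp_zero, map_zero]

section Directed

/-- The directed system of finitely generated submodules. -/
def fgSystem (K : ModuleCat.{0} A) : {H : Submodule A K // H.FG} ⥤ ModuleCat.{0} A where
  obj H := ModuleCat.of A H.1
  map f := ModuleCat.ofHom (Submodule.inclusion (leOfHom f))

/-- The cocone of inclusions of finitely generated submodules. -/
def fgCocone (K : ModuleCat.{0} A) : Cocone (fgSystem K) where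
  pt := K
  ι := { app := fun H => ModuleCat.ofHom H.1.subtype }

instance (K : ModuleCat.{0} A) : Nonempty {H : Submodule A K // H.FG} := ⟨⟨⊥, Submodule.fg_bot⟩⟩

instance (K : ModuleCat.{0} A) : IsDirected {H : Submodule A K // H.FG} (· ≤ ·) :=
  ⟨fun H H' => ⟨⟨H.1 ⊔ H'.1, H.2.sup H'.2⟩, le_sup_left (a := H.1), le_sup_right (a := H.1)⟩⟩

lemma nonempty_isColimit_fgCocone (K : ModuleCat.{0} A) : Nonempty (IsColimit (fgCocone K)) := by
  refine ModuleCat.nonempty_isColimit_of_directed _ (fun x => ?_) (fun H x hx => ?_)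
  · exact ⟨⟨Submodule.span A {x}, Submodule.fg_span_singleton x⟩,
      ⟨x, Submodule.mem_span_singleton_self x⟩, rfl⟩
  · refine ⟨H, 𝟙 _, ?_⟩
    rw [CategoryTheory.Functor.map_id]
    exact Subtype.ext hx

/-- If `E` commutes with direct limits, the class of the identity of `K` is represented by an
endomorphism with image in a finitely generated submodule. -/
lemma exists_fg_of_preservesColimits
    [PreservesColimitsOfShape {H : Submodule A K // H.FG} E] :
    ∃ φ : K ⟶ K, ∃ L : Submodule A K, L.FG ∧ (∀ x, φ.hom x ∈ L) ∧ Q.q K φ = Q.q K (𝟙 K) := by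
  obtain ⟨hc⟩ := nonempty_isColimit_fgCocone K
  obtain ⟨H, y, hy⟩ := ModuleCat.exists_rep_of_isColimit (isColimitOfPreserves E hc) (Q.q K (𝟙 K))
  obtain ⟨f, rfl⟩ := Q.surjective _ y
  refine ⟨f ≫ (fgCocone K).ι.app H, H.1, H.2, fun x => ?_, ?_⟩
  · exact (f.hom x).2
  · exact (Q.map_q _ f).symm.trans hy

/-- Homomorphisms from a finitely generated module to a direct limit which vanish in the limit
vanish at some stage. -/
lemma exists_comp_map_eq_zero {J : Type} [Preorder J] [IsDirected J (· ≤ ·)] [Nonempty J]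
    {D : J ⥤ ModuleCat.{0} A} {c : Cocone D} (hc : IsColimit c) (X : ModuleCat.{0} A)
    [Module.Finite A X] {j : J} (f : X ⟶ D.obj j) (hf : f ≫ c.ι.app j = 0) :
    ∃ k, ∃ g : j ⟶ k, f ≫ D.map g = 0 := by
  classical
  obtain ⟨t, ht⟩ := Module.Finite.fg_top (R := A) (M := X)
  have key : ∀ s : Finset X, ∃ k, ∃ g : j ⟶ k, ∀ x ∈ s, (D.map g).hom (f.hom x) = 0 := by
    intro s
    induction s using Finset.induction_on with
    | empty => exact ⟨j, 𝟙 _, by simp⟩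
    | insert a s _ ih =>
      obtain ⟨k, g, hg⟩ := ih
      obtain ⟨k', g', hg'⟩ := ModuleCat.exists_map_eq_zero_of_isColimit hc (f.hom a)
        (congr($(hf).hom a))
      obtain ⟨l, h1, h2⟩ := directed_of (· ≤ ·) k k'
      refine ⟨l, g ≫ homOfLE h1, fun x hx => ?_⟩
      rcases Finset.mem_insert.1 hx with rfl | hx
      · rw [show g ≫ homOfLE h1 = g' ≫ homOfLE h2 from Subsingleton.elim _ _, D.map_comp,
          ModuleCat.comp_apply, hg', map_zero]
      · rw [D.map_comp, ModuleCat.comp_apply, hg x hx, map_zero]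
  obtain ⟨k, g, hg⟩ := key t
  refine ⟨k, g, ModuleCat.hom_ext (LinearMap.ext_on ht fun x hx => hg x hx)⟩

/-- Homomorphisms from a finitely generated projective module to a direct limit factor through
some stage. -/
lemma exists_factor {J : Type} [Preorder J] [IsDirected J (· ≤ ·)] [Nonempty J]
    {D : J ⥤ ModuleCat.{0} A} {c : Cocone D} (hc : IsColimit c) (X : ModuleCat.{0} A)
    [Module.Finite A X] [Module.Projective A X] (f : X ⟶ c.pt) :
    ∃ j, ∃ g : X ⟶ D.obj j, g ≫ c.ι.app j = f := by
  obtain ⟨n, s, hs⟩ := Module.Finite.exists_fin' A X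
  obtain ⟨r, hr⟩ := Module.projective_lifting_property s LinearMap.id hs
  choose j y hy using fun m : Fin n =>
    ModuleCat.exists_rep_of_isColimit hc (f.hom (s (Pi.single m 1)))
  obtain ⟨l, hl⟩ := Finite.exists_le j
  let g : (Fin n → A) →ₗ[A] D.obj l :=
    (Pi.basisFun A (Fin n)).constr ℕ fun m => (D.map (homOfLE (hl m))).hom (y m)
  have hg : (c.ι.app l).hom ∘ₗ g = f.hom ∘ₗ s := by
    refine (Pi.basisFun A (Fin n)).ext fun m => ?_
    rw [LinearMap.comp_apply, Module.Basis.constr_basis, LinearMap.comp_apply, Pi.basisFun_apply,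
      ← hy m, ← ModuleCat.comp_apply, c.w]
  refine ⟨l, ModuleCat.ofHom (g ∘ₗ r), ModuleCat.hom_ext ?_⟩
  change (c.ι.app l).hom ∘ₗ g ∘ₗ r = f.hom
  rw [← LinearMap.comp_assoc, hg, LinearMap.comp_assoc, hr, LinearMap.comp_id]

end Directed

end FunctorPresentation

namespace FunctorPresentation
variable {A B : Type} [Ring A] [Ring B] {E : ModuleCat.{0} A ⥤ ModuleCat.{0} B}
  {K F : ModuleCat.{0} A} {i : K ⟶ F} (Q : FunctorPresentation E i)

include Q in
/-- If `K` is finitely generated projective and `K ⟶ F` factors through a finitely generated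
projective direct summand of `F`, then `E` commutes with direct limits. -/
lemma preservesColimitsOfShape_of_directed [Module.Finite A K] [Module.Projective A K]
    {X : ModuleCat.{0} A} [Module.Finite A X] [Module.Projective A X]
    (i' : K ⟶ X) (a : X ⟶ F) (b : F ⟶ X) (hi : i' ≫ a = i) (hab : a ≫ b = 𝟙 X)
    (J : Type) [Preorder J] [IsDirected J (· ≤ ·)] [Nonempty J] :
    PreservesColimitsOfShape J E := by
  refine ⟨fun {D} => ⟨fun {c} hc => ModuleCat.nonempty_isColimit_of_directed (E.mapCocone c)
    (fun x => ?_) (fun j x hx => ?_)⟩⟩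
  · obtain ⟨f, rfl⟩ := Q.surjective _ x
    obtain ⟨j, g, rfl⟩ := exists_factor hc K f
    exact ⟨j, Q.q _ g, Q.map_q _ _⟩
  · obtain ⟨f, rfl⟩ := Q.surjective _ x
    obtain ⟨g, hg⟩ := (Q.q_eq_zero_iff _).1 ((Q.map_q (c.ι.app j) f).symm.trans hx)
    obtain ⟨j', g', hg'⟩ := exists_factor hc X (a ≫ g)
    obtain ⟨l, h1, h2⟩ := directed_of (· ≤ ·) j j'
    obtain ⟨k, u, hu⟩ := exists_comp_map_eq_zero hc K
      (f ≫ D.map (homOfLE h1) - i' ≫ g' ≫ D.map (homOfLE h2)) (by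
        rw [Preadditive.sub_comp, Category.assoc, Category.assoc, Category.assoc, c.w, c.w, hg',
          ← hg, ← hi, Category.assoc, sub_self])
    rw [Preadditive.sub_comp, sub_eq_zero, Category.assoc, ← D.map_comp] at hu
    refine ⟨k, homOfLE h1 ≫ u, ?_⟩
    refine (Q.map_q _ _).trans ((Q.q_eq_zero_iff _).2
      ⟨b ≫ g' ≫ D.map (homOfLE h2) ≫ D.map u, ?_⟩)
    rw [hu, ← hi, Category.assoc, reassoc_of% hab]
    simp only [Category.assoc]

section Coproduct

/-- A coproduct of modules is generated by its summands. -/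
lemma _root_.ModuleCat.sigma_submodule_eq_top {ι : Type} (X : ι → ModuleCat.{0} A)
    (W : Submodule A (∐ X : ModuleCat.{0} A)) (h : ∀ k x, (Sigma.ι X k).hom x ∈ W) : W = ⊤ := by
  have : ModuleCat.ofHom W.mkQ = 0 := Sigma.hom_ext _ _ fun k => by
    ext x
    simpa using h k x
  rw [← W.ker_mkQ]
  exact LinearMap.ker_eq_top.2 congr($(this).hom)

/-- An element of a coproduct of modules is the sum of finitely many of its components. -/
lemma _root_.ModuleCat.exists_sum_sigma {ι : Type} [DecidableEq ι] (X : ι → ModuleCat.{0} A)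
    (y : (∐ X : ModuleCat.{0} A)) :
    ∃ s : Finset ι, ∀ t, s ⊆ t → ∑ k ∈ t, (Sigma.ι X k).hom ((Sigma.π X k).hom y) = y := by
  classical
  let W : Submodule A (∐ X : ModuleCat.{0} A) :=
    { carrier := {y | ∃ s : Finset ι, ∀ t, s ⊆ t →
        ∑ k ∈ t, (Sigma.ι X k).hom ((Sigma.π X k).hom y) = y}
      zero_mem' := ⟨∅, by simp⟩
      add_mem' := by
        rintro y z ⟨s, hs⟩ ⟨s', hs'⟩
        refine ⟨s ∪ s', fun t ht => ?_⟩
        simp only [map_add, Finset.sum_add_distrib]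
        rw [hs t (Finset.union_subset_left ht), hs' t (Finset.union_subset_right ht)]
      smul_mem' := by
        rintro a y ⟨s, hs⟩
        refine ⟨s, fun t ht => ?_⟩
        simp only [map_smul, ← Finset.smul_sum, hs t ht] }
  have : W = ⊤ := ModuleCat.sigma_submodule_eq_top X W fun k x => by
    refine ⟨{k}, fun t ht => ?_⟩
    rw [Finset.sum_eq_single k]
    · rw [← ModuleCat.comp_apply (Sigma.ι X k), Sigma.ι_π_eq_id]; rfl
    · intro l _ hl
      rw [← ModuleCat.comp_apply (Sigma.ι X k), Sigma.ι_π_of_ne _ hl.symm]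
      simp
    · exact fun h => absurd (Finset.singleton_subset_iff.1 ht) h
  exact (this ▸ Submodule.mem_top : y ∈ W)

lemma _root_.ModuleCat.exists_sum_comp_sigma {ι : Type} [DecidableEq ι] (X : ι → ModuleCat.{0} A)
    [Module.Finite A K] (f : K ⟶ ∐ X) :
    ∃ s : Finset ι, ∑ k ∈ s, (f ≫ Sigma.π X k) ≫ Sigma.ι X k = f := by
  classical
  obtain ⟨t, ht⟩ := Module.Finite.fg_top (R := A) (M := K)
  choose s hs using fun x : K => ModuleCat.exists_sum_sigma X (f.hom x)
  refine ⟨t.biUnion s, ModuleCat.hom_ext (LinearMap.ext_on ht fun x hx => ?_)⟩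
  simpa [ModuleCat.hom_sum] using hs x _ (Finset.subset_biUnion_of_mem s hx)

include Q in
/-- If `K` is finitely generated, then `E` commutes with direct sums. -/
lemma preservesColimitsOfShape_discrete_of_finite [Module.Finite A K] (ι : Type) :
    PreservesColimitsOfShape (Discrete ι) E := by
  classical
  have (X : ι → ModuleCat.{0} A) : PreservesColimit (Discrete.functor X) E := ?_
  · exact preservesColimitsOfShape_of_discrete E
  have : IsIso (sigmaComparison E X) := by
    rw [ConcreteCategory.isIso_iff_bijective]
    constructor
    · refine (injective_iff_map_eq_zero (sigmaComparison E X).hom).2 fun y hy => ?_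
      have hπ : ∀ k, (Sigma.π (fun k => E.obj (X k)) k).hom y = 0 := fun k => by
        have : sigmaComparison E X ≫ E.map (Sigma.π X k) = Sigma.π (fun k => E.obj (X k)) k := by
          refine Sigma.hom_ext _ _ fun l => ?_
          rw [ι_comp_sigmaComparison_assoc, ← E.map_comp]
          by_cases hl : l = k
          · subst hl
            rw [Sigma.ι_π_eq_id, Sigma.ι_π_eq_id, E.map_id]
          · rw [Sigma.ι_π_of_ne _ hl, Sigma.ι_π_of_ne _ hl]
            ext x
            exact Q.map_zero_apply x
        rw [← this, ModuleCat.comp_apply, hy, map_zero]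
      obtain ⟨s, hs⟩ := ModuleCat.exists_sum_sigma _ y
      rw [← hs s subset_rfl]
      exact Finset.sum_eq_zero fun k _ => by rw [hπ, map_zero]
    · intro z
      obtain ⟨f, rfl⟩ := Q.surjective _ z
      obtain ⟨s, hs⟩ := ModuleCat.exists_sum_comp_sigma X f
      refine ⟨∑ k ∈ s, (Sigma.ι (fun k => E.obj (X k)) k).hom (Q.q _ (f ≫ Sigma.π X k)), ?_⟩
      conv_rhs => rw [← hs]
      rw [map_sum, map_sum]
      refine Finset.sum_congr rfl fun k _ => ?_
      rw [← Q.map_q (Sigma.ι X k)]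
      exact congr($(ι_comp_sigmaComparison E X k).hom _)
  exact PreservesCoproduct.of_iso_comparison E X

/-- If `E` commutes with direct sums of copies of a finitely generated generator, the class of the
identity of `K` is represented by an endomorphism with image in a finitely generated submodule. -/
lemma exists_fg_of_isIso_sigmaDesc {E : ModuleCat.{0} A ⥤ ModuleCat.{0} ℤ}
    (Q : FunctorPresentation E i) [Module.Projective A K] (R₀ : ModuleCat.{0} A)
    [Module.Finite A R₀] (hR₀ : ∀ k : K, ∃ t : R₀ ⟶ K, ∃ x, t.hom x = k)
    [IsIso (Sigma.desc (fun k : K => E.map (Sigma.ι (fun _ : K => R₀) k)))] :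
    ∃ φ : K ⟶ K, ∃ L : Submodule A K, L.FG ∧ (∀ x, φ.hom x ∈ L) ∧ Q.q K φ = Q.q K (𝟙 K) := by
  choose t x hx using hR₀
  let G : ModuleCat.{0} A := ∐ fun _ : K => R₀
  let τ : G ⟶ K := Sigma.desc t
  have hτ : Function.Surjective τ.hom := fun k => by
    refine ⟨(Sigma.ι (fun _ : K => R₀) k).hom (x k), ?_⟩
    rw [← ModuleCat.comp_apply, Sigma.ι_desc, hx]
  obtain ⟨r, hr⟩ := Module.projective_lifting_property τ.hom LinearMap.id hτ
  let d := Sigma.desc (fun k : K => E.map (Sigma.ι (fun _ : K => R₀) k))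
  let W : Submodule ℤ (∐ fun _ : K => E.obj R₀ : ModuleCat.{0} ℤ) :=
    { carrier := {y | ∃ f : K ⟶ G, ∃ L : Submodule A G, L.FG ∧ (∀ x, f.hom x ∈ L) ∧
        Q.q G f = d.hom y}
      zero_mem' := ⟨0, ⊥, Submodule.fg_bot, by simp, by simp⟩
      add_mem' := by
        rintro y z ⟨f, L, hL, hf, hy⟩ ⟨f', L', hL', hf', hz⟩
        exact ⟨f + f', L ⊔ L', hL.sup hL', fun x => Submodule.add_mem_sup (hf x) (hf' x),
          by rw [map_add, map_add, hy, hz]⟩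
      smul_mem' := by
        rintro n y ⟨f, L, hL, hf, hy⟩
        exact ⟨n • f, L, hL, fun x => zsmul_mem (hf x) n, by
          rw [map_zsmul, hy]
          exact ((d.hom.map_smul n y).trans (int_smul_eq_zsmul _ n _)).symm⟩ }
  have hW : W = ⊤ := ModuleCat.sigma_submodule_eq_top _ W fun k y => by
    obtain ⟨f, rfl⟩ := Q.surjective _ y
    refine ⟨f ≫ Sigma.ι (fun _ : K => R₀) k, LinearMap.range (Sigma.ι (fun _ : K => R₀) k).hom,
      Submodule.FG.of_finite, fun x => ⟨f.hom x, rfl⟩, ?_⟩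
    rw [← Q.map_q]
    exact congr($(Sigma.ι_desc (fun k : K => E.map (Sigma.ι (fun _ : K => R₀) k)) k).hom _).symm
  obtain ⟨y, hy⟩ := ((ConcreteCategory.isIso_iff_bijective d).1 ‹_›).2 (Q.q G (ModuleCat.ofHom r))
  obtain ⟨f, L, hL, hf, hfy⟩ : y ∈ W := hW ▸ Submodule.mem_top
  refine ⟨f ≫ τ, L.map τ.hom, hL.map _, fun x => ⟨_, hf x, rfl⟩, ?_⟩
  rw [← Q.map_q, hfy]
  refine (congrArg (E.map τ).hom hy).trans ?_
  rw [Q.map_q]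
  congr 1
  exact ModuleCat.hom_ext hr

end Coproduct

end FunctorPresentation

section Main
variable {R : Type} [Ring R] (hher : ∀ I : Ideal Rᵐᵒᵖ, Module.Projective Rᵐᵒᵖ I) {M : RMod R}

/-- `Ext¹(M, -)` is presented by any projective presentation of `M`. -/
lemma nonempty_functorPresentation_ext {K F : RMod R} (i : K ⟶ F) (p : F ⟶ M)
    [Module.Projective Rᵐᵒᵖ K] [Module.Projective Rᵐᵒᵖ F] (hi : Function.Injective i.hom)
    (hp : Function.Surjective p.hom) (hip : LinearMap.range i.hom = LinearMap.ker p.hom) :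
    Nonempty (FunctorPresentation (extFun R 1 M) i) := by
  have : Mono i := (ModuleCat.mono_iff_injective i).2 hi
  have : Epi p := (ModuleCat.epi_iff_surjective p).2 hp
  have w : i ≫ p = 0 := ModuleCat.hom_ext (LinearMap.range_le_ker_iff.1 hip.le)
  have ex : (ShortComplex.mk i p w).Exact :=
    (ShortComplex.moduleCat_exact_iff_range_eq_ker _).2 hip
  obtain ⟨q, h₁, h₂, h₃⟩ := exists_ext_presentation ℤ ex
  exact ⟨⟨q, h₁, h₂, h₃ _⟩⟩

/-- The covering of `M` by the free module on its elements. -/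
abbrev freeCover (M : RMod R) : (M →₀ Rᵐᵒᵖ) →ₗ[Rᵐᵒᵖ] M := Finsupp.linearCombination Rᵐᵒᵖ id

/-- The inclusion of the relations of `M` in the free module on the elements of `M`. -/
abbrev freeCoverKernel (M : RMod R) : ModuleCat.of Rᵐᵒᵖ (LinearMap.ker (freeCover M)) ⟶
    ModuleCat.of Rᵐᵒᵖ (M →₀ Rᵐᵒᵖ) :=
  ModuleCat.ofHom (LinearMap.ker (freeCover M)).subtype

lemma freeCover_surjective (M : RMod R) : Function.Surjective (freeCover M) :=
  Finsupp.linearCombination_surjective _ Function.surjective_id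

include hher in
lemma nonempty_functorPresentation_freeCover :
    Nonempty (FunctorPresentation (extFun R 1 M) (freeCoverKernel M)) := by
  have : Module.Projective Rᵐᵒᵖ (LinearMap.ker (freeCover M)) := .submodule_of_hereditary hher _
  exact nonempty_functorPresentation_ext (freeCoverKernel M) (ModuleCat.ofHom (freeCover M))
    Subtype.val_injective (freeCover_surjective M) (Submodule.range_subtype _)

include hher in
/-- If the class of the identity of the relations of `M` is represented by an endomorphism with
image in a finitely generated submodule, then `M` is the direct sum of a finitely presented module
and a projective module. -/
lemma exists_decomposition {E : RMod R ⥤ ModuleCat.{0} ℤ}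
    (Q : FunctorPresentation E (freeCoverKernel M))
    (hQ : ∃ φ : ModuleCat.of Rᵐᵒᵖ (LinearMap.ker (freeCover M)) ⟶ ModuleCat.of Rᵐᵒᵖ
        (LinearMap.ker (freeCover M)),
      ∃ L : Submodule Rᵐᵒᵖ (LinearMap.ker (freeCover M)),
        L.FG ∧ (∀ x, φ.hom x ∈ L) ∧ Q.q _ φ = Q.q _ (𝟙 _)) :
    ∃ (N P : RMod R), Module.FinitePresentation Rᵐᵒᵖ N ∧ Projective P ∧
      Nonempty (M ≅ (N ⊞ P)) := by
  obtain ⟨φ, L, hL, hφL, hφ⟩ := hQ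
  obtain ⟨h, hh⟩ := (Q.q_eq_zero_iff (𝟙 _ - φ)).1 (by rw [map_sub, hφ, sub_self])
  let K := LinearMap.ker (freeCover M)
  obtain ⟨N, P, hNP, hN, hP⟩ := exists_finitePresentation_isCompl_projective hher (freeCover M)
    (freeCover_surjective M) (LinearMap.id - K.subtype ∘ₗ h.hom)
    (fun x => by
      have : freeCover M (h.hom x).1 = 0 := (h.hom x).2
      rw [LinearMap.sub_apply, map_sub, LinearMap.comp_apply]
      exact (congrArg (_ - ·) this).trans (sub_zero _))
    (L.map K.subtype) (hL.map _) (Submodule.map_subtype_le K L)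
    (fun x hx => by
      refine ⟨φ.hom ⟨x, hx⟩, hφL _, ?_⟩
      have : h.hom x = ⟨x, hx⟩ - φ.hom ⟨x, hx⟩ := congr($(hh).hom ⟨x, hx⟩)
      have := congrArg Subtype.val this
      simp only [LinearMap.sub_apply, LinearMap.comp_apply, LinearMap.id_apply,
        Submodule.subtype_apply, this, K]
      exact (sub_sub_cancel _ _).symm)
  exact ⟨ModuleCat.of _ N, ModuleCat.of _ P, hN, (ModuleCat.of _ P).projective_of_categoryTheory_projective,
    ⟨(Submodule.prodEquivOfIsCompl N P hNP).symm.toModuleIso ≪≫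
      (ModuleCat.biprodIsoProd (ModuleCat.of _ N) (ModuleCat.of _ P)).symm⟩⟩

include hher in
/-- The direct sum of a finitely presented module and a projective module has a projective
presentation whose kernel is finitely generated and lies in a finitely generated summand. -/
lemma exists_finite_presentation_of_iso {N P : RMod R} [Module.FinitePresentation Rᵐᵒᵖ N]
    [Projective P] (e : M ≅ (N ⊞ P)) :
    ∃ (K X F : RMod R) (i' : K ⟶ X) (a : X ⟶ F) (b : F ⟶ X), Module.Finite Rᵐᵒᵖ K ∧
      Module.Projective Rᵐᵒᵖ K ∧ Module.Finite Rᵐᵒᵖ X ∧ Module.Projective Rᵐᵒᵖ X ∧ a ≫ b = 𝟙 X ∧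
      Nonempty (FunctorPresentation (extFun R 1 M) (i' ≫ a)) := by
  have : Module.Projective Rᵐᵒᵖ P := P.projective_of_module_projective
  obtain ⟨n, s, hs⟩ := Module.Finite.exists_fin' Rᵐᵒᵖ N
  have hK : Module.Projective Rᵐᵒᵖ (LinearMap.ker s) := .submodule_of_hereditary hher _
  have hfg : (LinearMap.ker s).FG := Module.FinitePresentation.fg_ker s hs
  have : Module.Finite Rᵐᵒᵖ (LinearMap.ker s) := Module.Finite.iff_fg.2 hfg
  let e' : (N × P) ≃ₗ[Rᵐᵒᵖ] M := (e ≪≫ ModuleCat.biprodIsoProd N P).symm.toLinearEquiv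
  let p : ((Fin n → Rᵐᵒᵖ) × P) →ₗ[Rᵐᵒᵖ] M := e' ∘ₗ s.prodMap LinearMap.id
  refine ⟨ModuleCat.of _ (LinearMap.ker s), ModuleCat.of _ (Fin n → Rᵐᵒᵖ),
    ModuleCat.of _ ((Fin n → Rᵐᵒᵖ) × P), ModuleCat.ofHom (LinearMap.ker s).subtype,
    ModuleCat.ofHom (LinearMap.inl _ _ _), ModuleCat.ofHom (LinearMap.fst _ _ _),
    this, hK, inferInstance, inferInstance, rfl, ?_⟩
  refine nonempty_functorPresentation_ext _ (ModuleCat.ofHom p) ?_ ?_ ?_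
  · exact LinearMap.inl_injective.comp Subtype.val_injective
  · exact e'.surjective.comp (hs.prodMap Function.surjective_id)
  · ext ⟨x, y⟩
    have h1 : p (x, y) = 0 ↔ s x = 0 ∧ y = 0 :=
      e'.map_eq_zero_iff.trans Prod.mk_eq_zero
    refine Iff.trans ?_ h1.symm
    constructor
    · rintro ⟨k, hk⟩
      have hk' : ((k : Fin n → Rᵐᵒᵖ), (0 : P)) = (x, y) := hk
      rw [Prod.mk.injEq] at hk'
      exact ⟨hk'.1 ▸ k.2, hk'.2.symm⟩
    · rintro ⟨hx, rfl⟩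
      exact ⟨⟨x, hx⟩, rfl⟩

/-- The homomorphism from `R` determined by an element of a right module. -/
def regRHom {K : RMod R} (k : K) : regR R ⟶ K :=
  ModuleCat.ofHom
    { toFun := fun r => (MulOpposite.op (show R from r)) • k
      map_add' := fun x y => add_smul (MulOpposite.op (show R from x)) (MulOpposite.op y) k
      map_smul' := fun s x => mul_smul s (MulOpposite.op (show R from x)) k }

instance : Module.Finite Rᵐᵒᵖ (regR R) :=
  Module.Finite.equiv (MulOpposite.opLinearEquiv Rᵐᵒᵖ : R ≃ₗ[Rᵐᵒᵖ] Rᵐᵒᵖ).symm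

end Main

theorem hereditary_ext1_tfae (R : Type) [Ring R]
    (hher : ∀ (I : Ideal Rᵐᵒᵖ), Module.Projective Rᵐᵒᵖ I) (M : RMod R) :
    (CommutesWithDirectLimits R M ↔ CommutesWithDirectSums R M) ∧
    (CommutesWithDirectSums R M ↔ CommutesWithSumsOfR R 1 M) ∧
    (CommutesWithSumsOfR R 1 M ↔
      ∃ (N P : RMod R), Module.FinitePresentation Rᵐᵒᵖ N ∧ Projective P ∧
        Nonempty (M ≅ (N ⊞ P))) := by
  obtain ⟨Q⟩ := nonempty_functorPresentation_freeCover hher (M := M)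
  have : Module.Projective Rᵐᵒᵖ (LinearMap.ker (freeCover M)) := .submodule_of_hereditary hher _
  have h14 : CommutesWithDirectLimits R M →
      ∃ (N P : RMod R), Module.FinitePresentation Rᵐᵒᵖ N ∧ Projective P ∧
        Nonempty (M ≅ (N ⊞ P)) := fun h => by
    have := h {H : Submodule Rᵐᵒᵖ (ModuleCat.of Rᵐᵒᵖ (LinearMap.ker (freeCover M))) // H.FG}
    exact exists_decomposition hher Q Q.exists_fg_of_preservesColimits
  have h23 : CommutesWithDirectSums R M → CommutesWithSumsOfR R 1 M := fun h ι => by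
    have := h ι
    exact (inferInstance : IsIso (sigmaComparison (extFun R 1 M) fun _ : ι => regR R))
  have h34 : CommutesWithSumsOfR R 1 M →
      ∃ (N P : RMod R), Module.FinitePresentation Rᵐᵒᵖ N ∧ Projective P ∧
        Nonempty (M ≅ (N ⊞ P)) := fun h => by
    have := h (ModuleCat.of Rᵐᵒᵖ (LinearMap.ker (freeCover M)))
    exact exists_decomposition hher Q (Q.exists_fg_of_isIso_sigmaDesc (regR R)
      fun k => ⟨regRHom k, (1 : R), one_smul Rᵐᵒᵖ k⟩)
  have h412 : (∃ (N P : RMod R), Module.FinitePresentation Rᵐᵒᵖ N ∧ Projective P ∧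
      Nonempty (M ≅ (N ⊞ P))) → CommutesWithDirectLimits R M ∧ CommutesWithDirectSums R M := by
    rintro ⟨N, P, _, _, ⟨e⟩⟩
    obtain ⟨K, X, F, i', a, b, _, _, _, _, hab, ⟨Q'⟩⟩ := exists_finite_presentation_of_iso hher e
    exact ⟨fun J _ _ _ => Q'.preservesColimitsOfShape_of_directed i' a b rfl hab J,
      fun ι => Q'.preservesColimitsOfShape_discrete_of_finite ι⟩
  exact ⟨⟨fun h => (h412 (h14 h)).2, fun h => (h412 (h34 (h23 h))).1⟩,
    ⟨h23, fun h => (h412 (h34 h)).2⟩, h34, fun h => h23 (h412 h).2⟩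
end
end

section
/- Let R be a ring possessing a non-finitely-generated small right ideal I (e.g., R an infinite direct product of rings). Then M = R/I is a finitely generated right R-module such that Ext¹_R(M, −) commutes with direct sums but does not commute with direct limits. -/
open CategoryTheory CategoryTheory.Limits Opposite

noncomputable section

namespace CategoryTheory

namespace ProjectiveResolution

variable {C : Type*} [Category* C] [Abelian C]

/-- The augmentation of a projective resolution of `Z`, as a morphism to `Z`. -/
def augmentation {Z : C} (Q : ProjectiveResolution Z) : Q.complex.X 0 ⟶ Z := Q.π.f 0

instance {Z : C} (Q : ProjectiveResolution Z) : Epi Q.augmentation :=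
  inferInstanceAs (Epi (Q.π.f 0))

lemma d_comp_augmentation {Z : C} (Q : ProjectiveResolution Z) :
    Q.complex.d 1 0 ≫ Q.augmentation = 0 :=
  Q.complex_d_comp_π_f_zero

lemma exact_augmentation {Z : C} (Q : ProjectiveResolution Z) :
    (ShortComplex.mk _ _ Q.d_comp_augmentation).Exact :=
  Q.exact₀

variable {S : ShortComplex C}

/-- The complex obtained by splicing a projective resolution of `S.X₁` onto `S.X₂`. -/
def spliceComplex (Q : ProjectiveResolution S.X₁) : ChainComplex C ℕ :=
  Q.complex.augment (Q.augmentation ≫ S.f) (by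
    rw [reassoc_of% Q.d_comp_augmentation, zero_comp])

lemma spliceComplex_exactAt_succ (hS : S.ShortExact) (Q : ProjectiveResolution S.X₁) (n : ℕ) :
    Q.spliceComplex.ExactAt (n + 1) := by
  have := hS.mono_f
  rw [HomologicalComplex.exactAt_iff' _ (n + 1 + 1) (n + 1) n (by simp) (by simp)]
  match n with
  | 0 =>
    let φ : ShortComplex.mk _ _ Q.d_comp_augmentation ⟶ Q.spliceComplex.sc' 2 1 0 :=
      { τ₁ := 𝟙 (Q.complex.X 1)
        τ₂ := 𝟙 (Q.complex.X 0)
        τ₃ := S.f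
        comm₁₂ := (Category.id_comp _).trans (Category.comp_id _).symm
        comm₂₃ := Category.id_comp _ }
    have : Epi φ.τ₁ := inferInstanceAs (Epi (𝟙 (Q.complex.X 1)))
    have : IsIso φ.τ₂ := inferInstanceAs (IsIso (𝟙 (Q.complex.X 0)))
    have : Mono φ.τ₃ := inferInstanceAs (Mono S.f)
    exact (ShortComplex.exact_iff_of_epi_of_isIso_of_mono φ).1 Q.exact_augmentation
  | n + 1 => exact Q.exact_succ n

lemma augmentation_comp_comp (Q : ProjectiveResolution S.X₁) :
    (Q.augmentation ≫ S.f) ≫ S.g = 0 := by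
  rw [Category.assoc, S.zero, comp_zero]

lemma exact_augmentation_comp (hS : S.ShortExact) (Q : ProjectiveResolution S.X₁) :
    (ShortComplex.mk _ _ Q.augmentation_comp_comp).Exact := by
  let φ : ShortComplex.mk _ _ Q.augmentation_comp_comp ⟶ S :=
    { τ₁ := Q.augmentation
      τ₂ := 𝟙 S.X₂
      τ₃ := 𝟙 S.X₃
      comm₁₂ := (Category.comp_id _).symm
      comm₂₃ := (Category.id_comp _).trans (Category.comp_id _).symm }
  have : Epi φ.τ₁ := inferInstanceAs (Epi Q.augmentation)
  have : IsIso φ.τ₂ := inferInstanceAs (IsIso (𝟙 S.X₂))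
  have : Mono φ.τ₃ := inferInstanceAs (Mono (𝟙 S.X₃))
  exact (ShortComplex.exact_iff_of_epi_of_isIso_of_mono φ).2 hS.exact

/-- The projective resolution of `S.X₃` with `S.X₂` in degree zero obtained by splicing
a projective resolution of `S.X₁`. -/
def splice (hS : S.ShortExact) [Projective S.X₂] (Q : ProjectiveResolution S.X₁) :
    ProjectiveResolution S.X₃ where
  complex := Q.spliceComplex
  projective n := by
    cases n with
    | zero => exact inferInstanceAs (Projective S.X₂)
    | succ n => exact Q.projective n
  π := (ChainComplex.toSingle₀Equiv _ _).symm ⟨S.g, Q.augmentation_comp_comp⟩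
  quasiIso := ⟨fun n => by
    cases n
    · rw [ChainComplex.quasiIsoAt₀_iff, ShortComplex.quasiIso_iff_of_zeros']
      · refine (ShortComplex.exact_and_epi_g_iff_of_iso
          (S₁ := ShortComplex.mk _ _ Q.augmentation_comp_comp) ?_).1
          ⟨Q.exact_augmentation_comp hS, hS.epi_g⟩
        refine ShortComplex.isoMk (Iso.refl _) (Iso.refl _) (Iso.refl _) ?_ ?_
        · exact (Category.id_comp _).trans (Category.comp_id _).symm
        · refine (Category.id_comp _).trans (Eq.trans ?_ (Category.comp_id _).symm)
          exact ChainComplex.toSingle₀Equiv_symm_apply_f_zero _ _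
      all_goals rfl
    · rw [quasiIsoAt_iff_exactAt']
      · apply Q.spliceComplex_exactAt_succ hS
      · apply ChainComplex.exactAt_succ_single_obj⟩

section

variable (hS : S.ShortExact) [Projective S.X₂] (Q : ProjectiveResolution S.X₁)

/-- The map from the degree one term of the spliced resolution to the syzygy `S.X₁`. -/
def spliceToSyzygy : (Q.splice hS).complex.X 1 ⟶ S.X₁ := Q.augmentation

instance : Epi (Q.spliceToSyzygy hS) := inferInstanceAs (Epi Q.augmentation)

lemma d_comp_spliceToSyzygy : (Q.splice hS).complex.d 2 1 ≫ Q.spliceToSyzygy hS = 0 :=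
  Q.d_comp_augmentation

lemma exact_spliceToSyzygy : (ShortComplex.mk _ _ (Q.d_comp_spliceToSyzygy hS)).Exact :=
  Q.exact_augmentation

lemma spliceToSyzygy_comp : Q.spliceToSyzygy hS ≫ S.f = (Q.splice hS).complex.d 1 0 := rfl

end

end ProjectiveResolution

end CategoryTheory

lemma HomologicalComplex.isIso_descOpcycles_of_isColimit {C ι : Type*} [Category* C] [Preadditive C]
    {c : ComplexShape ι} (X : HomologicalComplex C c) {i j : ι} [X.HasHomology i] [X.HasHomology j]
    {A : C}
    (k : X.X i ⟶ A) (hj : c.prev i = j) (hk : X.d j i ≫ k = 0)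
    (h : IsColimit (CokernelCofork.ofπ k hk)) : IsIso (X.descOpcycles k j hj hk) := by
  have e : X.descOpcycles k j hj hk =
      ((X.opcyclesIsCokernel j i hj).coconePointUniqueUpToIso h).hom := by
    rw [← cancel_epi (X.pOpcycles i), p_descOpcycles]
    exact ((X.opcyclesIsCokernel j i hj).comp_coconePointUniqueUpToIso_hom h
      WalkingParallelPair.one).symm
  rw [e]
  infer_instance

namespace CategoryTheory.ProjectiveResolution

section syzygy

variable {C D : Type*} [Category* C] [Abelian C]
  [Category* D] [Abelian D]
  {Z K : C} (P : ProjectiveResolution Z) {ε : P.complex.X 1 ⟶ K} {j : K ⟶ P.complex.X 0}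
  (w : P.complex.d 2 1 ≫ ε = 0)

/-- The comparison between the opcycles in degree one of the image of a projective resolution
under an additive functor and the image of the first syzygy. -/
def opcyclesToSyzygy (F : C ⥤ D) [F.Additive] :
    ((F.mapHomologicalComplex _).obj P.complex).opcycles 1 ⟶ F.obj K :=
  HomologicalComplex.descOpcycles _ (F.map ε) 2 (by simp)
    ((F.map_comp _ _).symm.trans ((congrArg F.map w).trans (F.map_zero _ _)))

lemma p_opcyclesToSyzygy (F : C ⥤ D) [F.Additive] :
    ((F.mapHomologicalComplex _).obj P.complex).pOpcycles 1 ≫ P.opcyclesToSyzygy w F = F.map ε :=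
  HomologicalComplex.p_descOpcycles _ _ _ _ _

lemma opcyclesToSyzygy_comp (hj : ε ≫ j = P.complex.d 1 0) (F : C ⥤ D) [F.Additive] :
    P.opcyclesToSyzygy w F ≫ F.map j =
      ((F.mapHomologicalComplex _).obj P.complex).fromOpcycles 1 0 := by
  refine (cancel_epi (HomologicalComplex.pOpcycles _ _)).1 ?_
  refine Eq.trans ?_ (HomologicalComplex.p_fromOpcycles _ _ _).symm
  rw [← Category.assoc, p_opcyclesToSyzygy]
  exact (F.map_comp _ _).symm.trans (congrArg F.map hj)

lemma isIso_opcyclesToSyzygy [Epi ε] (hε : (ShortComplex.mk _ _ w).Exact)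
    (F : C ⥤ D) [F.Additive] [PreservesFiniteColimits F] : IsIso (P.opcyclesToSyzygy w F) := by
  exact HomologicalComplex.isIso_descOpcycles_of_isColimit
    ((F.mapHomologicalComplex _).obj P.complex) _ (by simp) _
    (CokernelCofork.mapIsColimit _ hε.gIsCokernel F)

lemma opcyclesMap_opcyclesToSyzygy {F G : C ⥤ D} [F.Additive] [G.Additive] (α : F ⟶ G) :
    HomologicalComplex.opcyclesMap
      ((NatTrans.mapHomologicalComplex α _).app P.complex) 1 ≫ P.opcyclesToSyzygy w G =
      P.opcyclesToSyzygy w F ≫ α.app K := by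
  rw [← cancel_epi (HomologicalComplex.pOpcycles _ _), ← Category.assoc, ← Category.assoc,
    HomologicalComplex.p_opcyclesMap, Category.assoc, p_opcyclesToSyzygy, p_opcyclesToSyzygy]
  exact (α.naturality _).symm

/-- The map from the first homology of the image of a projective resolution under an additive
functor to the image of the first syzygy. -/
def homologyToSyzygy (F : C ⥤ D) [F.Additive] :
    ((F.mapHomologicalComplex _).obj P.complex).homology 1 ⟶ F.obj K :=
  HomologicalComplex.homologyι _ 1 ≫ P.opcyclesToSyzygy w F

lemma homologyMap_homologyToSyzygy {F G : C ⥤ D} [F.Additive] [G.Additive] (α : F ⟶ G) :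
    HomologicalComplex.homologyMap
      ((NatTrans.mapHomologicalComplex α _).app P.complex) 1 ≫ P.homologyToSyzygy w G =
      P.homologyToSyzygy w F ≫ α.app K := by
  rw [homologyToSyzygy, HomologicalComplex.homologyι_naturality_assoc,
    opcyclesMap_opcyclesToSyzygy, homologyToSyzygy, Category.assoc]

lemma homologyToSyzygy_comp (hj : ε ≫ j = P.complex.d 1 0) (F : C ⥤ D) [F.Additive] :
    P.homologyToSyzygy w F ≫ F.map j = 0 := by
  rw [homologyToSyzygy, Category.assoc, P.opcyclesToSyzygy_comp w hj]
  exact HomologicalComplex.homologyι_comp_fromOpcycles _ 1 0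

lemma mono_homologyToSyzygy [Epi ε] (hε : (ShortComplex.mk _ _ w).Exact)
    (F : C ⥤ D) [F.Additive] [PreservesFiniteColimits F] : Mono (P.homologyToSyzygy w F) := by
  have := P.isIso_opcyclesToSyzygy w hε F
  unfold homologyToSyzygy
  infer_instance

lemma exact_homologyToSyzygy [Epi ε] (hε : (ShortComplex.mk _ _ w).Exact)
    (hj : ε ≫ j = P.complex.d 1 0) (F : C ⥤ D) [F.Additive] [PreservesFiniteColimits F] :
    (ShortComplex.mk _ _ (P.homologyToSyzygy_comp w hj F)).Exact := by
  have := P.isIso_opcyclesToSyzygy w hε F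
  let X := (F.mapHomologicalComplex _).obj P.complex
  have h : (ShortComplex.mk _ _ (X.homologyι_comp_fromOpcycles 1 0)).Exact :=
    ShortComplex.exact_of_f_is_kernel _ (X.homologyIsKernel 1 0 (by simp))
  let e : ShortComplex.mk _ _ (X.homologyι_comp_fromOpcycles 1 0) ≅
      ShortComplex.mk _ _ (P.homologyToSyzygy_comp w hj F) :=
    ShortComplex.isoMk (Iso.refl (X.homology 1)) (asIso (P.opcyclesToSyzygy w F))
      (Iso.refl (F.obj (P.complex.X 0))) (Category.id_comp _)
      ((P.opcyclesToSyzygy_comp w hj F).trans (Category.comp_id _).symm)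
  exact (ShortComplex.exact_iff_of_iso e).1 h

variable [HasProjectiveResolutions C]

/-- The first left derived functor computed as the homology in degree one. -/
def leftDerivedOneIso (F : C ⥤ D) [F.Additive] :
    (F.leftDerived 1).obj Z ≅ ((F.mapHomologicalComplex _).obj P.complex).homology 1 :=
  P.isoLeftDerivedObj F 1

lemma leftDerivedOneIso_hom_naturality {F G : C ⥤ D} [F.Additive] [G.Additive] (α : F ⟶ G) :
    (NatTrans.leftDerived α 1).app Z ≫ (P.leftDerivedOneIso G).hom =
      (P.leftDerivedOneIso F).hom ≫ HomologicalComplex.homologyMap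
        ((NatTrans.mapHomologicalComplex α _).app P.complex) 1 := by
  rw [P.leftDerived_app_eq α 1, ← Iso.eq_comp_inv]
  exact (Category.assoc _ _ _).symm

/-- The map from the first left derived functor at `Z` to the value at a first syzygy of `Z`. -/
def leftDerivedToSyzygy (F : C ⥤ D) [F.Additive] : (F.leftDerived 1).obj Z ⟶ F.obj K :=
  (P.leftDerivedOneIso F).hom ≫ P.homologyToSyzygy w F

lemma leftDerivedToSyzygy_naturality {F G : C ⥤ D} [F.Additive] [G.Additive] (α : F ⟶ G) :
    (NatTrans.leftDerived α 1).app Z ≫ P.leftDerivedToSyzygy w G =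
      P.leftDerivedToSyzygy w F ≫ α.app K := by
  rw [leftDerivedToSyzygy, ← Category.assoc, leftDerivedOneIso_hom_naturality, Category.assoc,
    homologyMap_homologyToSyzygy, leftDerivedToSyzygy, Category.assoc]

lemma leftDerivedToSyzygy_comp (hj : ε ≫ j = P.complex.d 1 0) (F : C ⥤ D) [F.Additive] :
    P.leftDerivedToSyzygy w F ≫ F.map j = 0 := by
  rw [leftDerivedToSyzygy, Category.assoc, P.homologyToSyzygy_comp w hj, comp_zero]

lemma mono_leftDerivedToSyzygy [Epi ε] (hε : (ShortComplex.mk _ _ w).Exact)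
    (F : C ⥤ D) [F.Additive] [PreservesFiniteColimits F] : Mono (P.leftDerivedToSyzygy w F) := by
  have := P.mono_homologyToSyzygy w hε F
  exact mono_comp _ _

lemma exact_leftDerivedToSyzygy [Epi ε] (hε : (ShortComplex.mk _ _ w).Exact)
    (hj : ε ≫ j = P.complex.d 1 0) (F : C ⥤ D) [F.Additive] [PreservesFiniteColimits F] :
    (ShortComplex.mk _ _ (P.leftDerivedToSyzygy_comp w hj F)).Exact := by
  let e : ShortComplex.mk _ _ (P.leftDerivedToSyzygy_comp w hj F) ≅
      ShortComplex.mk _ _ (P.homologyToSyzygy_comp w hj F) :=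
    ShortComplex.isoMk (P.leftDerivedOneIso F) (Iso.refl (F.obj K))
      (Iso.refl (F.obj (P.complex.X 0))) (Category.comp_id _).symm
      ((Category.id_comp _).trans (Category.comp_id _).symm)
  exact (ShortComplex.exact_iff_of_iso e).2 (P.exact_homologyToSyzygy w hε hj F)

end syzygy
end CategoryTheory.ProjectiveResolution

namespace CategoryTheory

section extOne

variable (R : Type*) [Ring R] {C : Type*} [Category* C] [Abelian C] [Linear R C]

instance preservesLimits_linearYoneda_obj (Y : C) : PreservesLimits ((linearYoneda R C).obj Y) := by
  have : PreservesLimits ((linearYoneda R C).obj Y ⋙ forget (ModuleCat R)) :=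
    inferInstanceAs (PreservesLimits (yoneda.obj Y))
  exact preservesLimits_of_reflects_of_preserves _ (forget (ModuleCat R))

instance preservesFiniteColimits_rightOp_linearYoneda_obj (Y : C) :
    PreservesFiniteColimits ((linearYoneda R C).obj Y).rightOp :=
  have : PreservesFiniteLimits ((linearYoneda R C).obj Y) := inferInstance
  preservesFiniteColimits_rightOp _

variable [EnoughProjectives C] {S : ShortComplex C} (hS : S.ShortExact) [Projective S.X₂]

/-- The connecting map from `Hom(S.X₁, Y)` to `Ext¹(S.X₃, Y)` attached to a short exact sequence
`S` with projective middle term, as a natural transformation in `Y`. -/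
def extConnecting : (linearCoyoneda R C).obj (op S.X₁) ⟶ (Ext R C 1).obj (op S.X₃) where
  app Y := (((projectiveResolution S.X₁).splice hS).leftDerivedToSyzygy
    ((projectiveResolution S.X₁).d_comp_spliceToSyzygy hS)
    ((linearYoneda R C).obj Y).rightOp).unop
  naturality Y Y' f := by
    have := ((projectiveResolution S.X₁).splice hS).leftDerivedToSyzygy_naturality
      ((projectiveResolution S.X₁).d_comp_spliceToSyzygy hS)
      (NatTrans.rightOp ((linearYoneda R C).map f))
    exact (congrArg Quiver.Hom.unop this).symm

lemma epi_extConnecting_app (Y : C) : Epi ((extConnecting R hS).app Y) :=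
  @unop_epi_of_mono _ _ _ _ _ (((projectiveResolution S.X₁).splice hS).mono_leftDerivedToSyzygy
    ((projectiveResolution S.X₁).d_comp_spliceToSyzygy hS)
    ((projectiveResolution S.X₁).exact_spliceToSyzygy hS) ((linearYoneda R C).obj Y).rightOp)

lemma map_f_comp_extConnecting_app (Y : C) :
    ((linearCoyoneda R C).map S.f.op).app Y ≫ (extConnecting R hS).app Y = 0 :=
  congrArg Quiver.Hom.unop
    (((projectiveResolution S.X₁).splice hS).leftDerivedToSyzygy_comp
      ((projectiveResolution S.X₁).d_comp_spliceToSyzygy hS)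
      ((projectiveResolution S.X₁).spliceToSyzygy_comp hS)
      ((linearYoneda R C).obj Y).rightOp)

lemma exact_extConnecting_app (Y : C) :
    (ShortComplex.mk _ _ (map_f_comp_extConnecting_app R hS Y)).Exact :=
  (((projectiveResolution S.X₁).splice hS).exact_leftDerivedToSyzygy
    ((projectiveResolution S.X₁).d_comp_spliceToSyzygy hS)
    ((projectiveResolution S.X₁).exact_spliceToSyzygy hS)
    ((projectiveResolution S.X₁).spliceToSyzygy_comp hS)
    ((linearYoneda R C).obj Y).rightOp).unop

/-- The extension class obtained by pushing out `S` along a morphism `S.X₁ ⟶ Y`. -/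
def extClass (Y : C) : (S.X₁ ⟶ Y) →ₗ[R] ((Ext R C 1).obj (op S.X₃)).obj Y :=
  ((extConnecting R hS).app Y).hom

lemma map_extClass {Y Y' : C} (q : S.X₁ ⟶ Y) (f : Y ⟶ Y') :
    (((Ext R C 1).obj (op S.X₃)).map f).hom (extClass R hS Y q) = extClass R hS Y' (q ≫ f) :=
  (congrArg (fun g => g.hom q) ((extConnecting R hS).naturality f)).symm

lemma exists_of_extClass_eq_zero {Y : C} (q : S.X₁ ⟶ Y) (hq : extClass R hS Y q = 0) :
    ∃ p : S.X₂ ⟶ Y, S.f ≫ p = q :=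
  (ShortComplex.moduleCat_exact_iff _).1 (exact_extConnecting_app R hS Y) q hq

end extOne

section

variable {J C D : Type*} [Category* J] [Category* C] [Category* D] [Abelian D] {A B E : C ⥤ D}

/-- A pointwise cokernel of functors preserving colimits of a given shape preserves them. -/
lemma preservesColimitsOfShape_of_exact (φ : A ⟶ B) (ψ : B ⟶ E)
    (w : ∀ Y, φ.app Y ≫ ψ.app Y = 0) (hψ : ∀ Y, Epi (ψ.app Y))
    (h : ∀ Y, (ShortComplex.mk _ _ (w Y)).Exact)
    [PreservesColimitsOfShape J A] [PreservesColimitsOfShape J B] :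
    PreservesColimitsOfShape J E where
  preservesColimit {K} :=
    { preserves {c} hc := ⟨by
        have hA := isColimitOfPreserves A hc
        have hB := isColimitOfPreserves B hc
        let ci (i : J) : K.obj i ⟶ c.pt := c.ι.app i
        let t (s : Cocone (K ⋙ E)) : Cocone (K ⋙ B) :=
          (Cocone.precompose (Functor.whiskerLeft K ψ)).obj s
        let si (s : Cocone (K ⋙ E)) (i : J) : E.obj (K.obj i) ⟶ s.pt := s.ι.app i
        let d (s : Cocone (K ⋙ E)) : B.obj c.pt ⟶ s.pt := hB.desc (t s)
        have hd (s : Cocone (K ⋙ E)) (i : J) : B.map (ci i) ≫ d s = ψ.app (K.obj i) ≫ si s i :=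
          hB.fac (t s) i
        have ht (s : Cocone (K ⋙ E)) : φ.app c.pt ≫ d s = 0 := by
          refine hA.hom_ext fun i => ?_
          have : A.map (ci i) ≫ φ.app c.pt ≫ d s = 0 := by
            rw [φ.naturality_assoc, hd, reassoc_of% (w (K.obj i)), zero_comp]
          exact this.trans comp_zero.symm
        have := fun Y => hψ Y
        have hdesc (s : Cocone (K ⋙ E)) : ψ.app c.pt ≫ (h c.pt).desc (d s) (ht s) = d s :=
          (h c.pt).g_desc _ _
        refine
          { desc s := (h c.pt).desc (d s) (ht s)
            fac s i := ?_
            uniq s m hm := ?_ }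
        · have : ψ.app (K.obj i) ≫ E.map (ci i) ≫ (h c.pt).desc (d s) (ht s) =
              ψ.app (K.obj i) ≫ si s i := by
            rw [← ψ.naturality_assoc, hdesc, hd]
          exact (cancel_epi (ψ.app (K.obj i))).1 this
        · refine (cancel_epi (ψ.app c.pt)).1 (hB.hom_ext fun i => ?_)
          have hm' : E.map (ci i) ≫ m = si s i := hm i
          have : B.map (ci i) ≫ ψ.app c.pt ≫ m =
              B.map (ci i) ≫ ψ.app c.pt ≫ (h c.pt).desc (d s) (ht s) := by
            rw [hdesc, hd, ψ.naturality_assoc, hm']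
          exact this⟩ }

end

end CategoryTheory

namespace CategoryTheory

/-- `Hom(K, -)` preserves colimits as a module-valued functor if it does so as a functor to
abelian groups. -/
lemma preservesColimitsOfShape_linearCoyoneda_int {J C : Type*} [Category* J] [Category* C]
    [Preadditive C] [Linear ℤ C] (K : C)
    [PreservesColimitsOfShape J (preadditiveCoyoneda.obj (op K))] :
    PreservesColimitsOfShape J ((linearCoyoneda ℤ C).obj (op K)) := by
  have : PreservesColimitsOfShape J
      ((linearCoyoneda ℤ C).obj (op K) ⋙ forget₂ (ModuleCat ℤ) AddCommGrpCat) :=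
    inferInstanceAs (PreservesColimitsOfShape J (preadditiveCoyoneda.obj (op K)))
  exact preservesColimitsOfShape_of_reflects_of_preserves _ (forget₂ (ModuleCat ℤ) AddCommGrpCat)

end CategoryTheory

namespace ModuleCat

variable {A : Type} [Ring A]

/-- Morphisms out of the regular module are elements. -/
def preadditiveCoyonedaSelfIso :
    preadditiveCoyoneda.obj (op (ModuleCat.of A A)) ≅ forget₂ (ModuleCat.{0} A) AddCommGrpCat :=
  NatIso.ofComponents (fun M => AddEquiv.toAddCommGrpIso
    (X := (preadditiveCoyoneda.obj (op (ModuleCat.of A A))).obj M)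
    (Y := (forget₂ (ModuleCat.{0} A) AddCommGrpCat).obj M)
    (ModuleCat.homAddEquiv.trans (LinearMap.ringLmapEquivSelf A ℕ M).toAddEquiv))
    (fun _ => rfl)

instance (J : Type) [Category.{0} J] :
    PreservesColimitsOfShape J (preadditiveCoyoneda.obj (op (ModuleCat.of A A))) :=
  preservesColimitsOfShape_of_natIso preadditiveCoyonedaSelfIso.symm

variable (M : ModuleCat.{0} A)

/-- The directed system of the quotients of `M` by its finitely generated submodules. -/
def quotientFG : {N : Submodule A M // N.FG} ⥤ ModuleCat.{0} A where
  obj N := ModuleCat.of A (M ⧸ N.1)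
  map f := ModuleCat.ofHom (Submodule.factor (leOfHom f))
  map_id _ := ModuleCat.hom_ext (Submodule.linearMap_qext _ rfl)
  map_comp _ _ := ModuleCat.hom_ext (Submodule.linearMap_qext _ rfl)

/-- The projection of `M` onto its quotient by a finitely generated submodule. -/
def toQuotientFG (N : {N : Submodule A M // N.FG}) : M ⟶ (quotientFG M).obj N :=
  ModuleCat.ofHom N.1.mkQ

lemma toQuotientFG_map {N N' : {N : Submodule A M // N.FG}} (f : N ⟶ N') :
    toQuotientFG M N ≫ (quotientFG M).map f = toQuotientFG M N' := rfl

lemma toQuotientFG_surjective (N : {N : Submodule A M // N.FG}) :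
    Function.Surjective (toQuotientFG M N) := N.1.mkQ_surjective

lemma toQuotientFG_eq_zero_iff (N : {N : Submodule A M // N.FG}) (x : M) :
    (toQuotientFG M N).hom x = 0 ↔ x ∈ N.1 := Submodule.Quotient.mk_eq_zero _

/-- The zero cocone over the quotients of `M` by its finitely generated submodules. -/
def quotientFGCocone : Cocone (quotientFG M) where
  pt := ModuleCat.of A PUnit
  ι := { app := fun _ => 0 }

instance : IsDirectedOrder {N : Submodule A M // N.FG} where
  directed N N' := ⟨⟨N.1 ⊔ N'.1, N.2.sup N'.2⟩, le_sup_left, le_sup_right⟩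

instance : Nonempty {N : Submodule A M // N.FG} := ⟨⟨⊥, Submodule.fg_bot⟩⟩

lemma cocone_quotientFG_app_eq_zero (s : Cocone (quotientFG M))
    (N : {N : Submodule A M // N.FG}) : s.ι.app N = 0 := by
  let sN (N : {N : Submodule A M // N.FG}) : (quotientFG M).obj N ⟶ s.pt := s.ι.app N
  suffices h : sN N = 0 from h
  have hs {N N' : {N : Submodule A M // N.FG}} (f : N ⟶ N') :
      toQuotientFG M N ≫ sN N = toQuotientFG M N' ≫ sN N' := by
    have hf : (quotientFG M).map f ≫ sN N' = sN N := s.w f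
    rw [← hf, ← Category.assoc, toQuotientFG_map]
  refine ModuleCat.hom_ext (LinearMap.ext fun y => ?_)
  obtain ⟨x, rfl⟩ := toQuotientFG_surjective M N y
  obtain ⟨N', hN, hx⟩ : ∃ N' : {N : Submodule A M // N.FG}, N ≤ N' ∧ x ∈ N'.1 :=
    ⟨⟨N.1 ⊔ Submodule.span A {x}, N.2.sup (Submodule.fg_span_singleton x)⟩,
      show N.1 ≤ N.1 ⊔ Submodule.span A {x} from le_sup_left,
      (show Submodule.span A {x} ≤ N.1 ⊔ Submodule.span A {x} from le_sup_right)
        (Submodule.mem_span_singleton_self x)⟩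
  have h₁ : (sN N).hom ((toQuotientFG M N).hom x) = (sN N').hom ((toQuotientFG M N').hom x) :=
    congrArg (fun g => g.hom x) (hs (homOfLE hN))
  rw [(toQuotientFG_eq_zero_iff M N' x).2 hx] at h₁
  exact h₁.trans (map_zero (sN N').hom)

/-- The directed colimit of the quotients of `M` by its finitely generated submodules is zero. -/
def isColimitQuotientFGCocone : IsColimit (quotientFGCocone M) where
  desc _ := 0
  fac s N := comp_zero.trans (cocone_quotientFG_app_eq_zero M s N).symm
  uniq _ _ _ := (ModuleCat.isZero_of_subsingleton (ModuleCat.of A PUnit)).eq_of_src _ _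

variable (I : Ideal A)

/-- The short exact sequence `0 → I → A → A ⧸ I → 0`. -/
def idealShortComplex : ShortComplex (ModuleCat.{0} A) :=
  ShortComplex.mk (X₁ := ModuleCat.of A I) (X₂ := ModuleCat.of A A)
    (X₃ := ModuleCat.of A (A ⧸ I)) (ModuleCat.ofHom I.subtype) (ModuleCat.ofHom (Submodule.mkQ I))
    (by
      ext x
      exact (Submodule.Quotient.mk_eq_zero I).2 x.2)

lemma idealShortComplex_shortExact : (idealShortComplex I).ShortExact where
  exact := by
    rw [ShortComplex.moduleCat_exact_iff]
    intro x hx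
    exact ⟨⟨x, (Submodule.Quotient.mk_eq_zero I).1 hx⟩, rfl⟩
  mono_f := (ModuleCat.mono_iff_injective _).2 I.injective_subtype
  epi_g := (ModuleCat.epi_iff_surjective _).2 (Submodule.mkQ_surjective I)

instance : Projective (idealShortComplex I).X₂ :=
  inferInstanceAs (Projective (ModuleCat.of A A))

lemma preservesColimitsOfShape_ext_one_quotient (J : Type) [Category.{0} J]
    [PreservesColimitsOfShape J (preadditiveCoyoneda.obj (op (ModuleCat.of A I)))] :
    PreservesColimitsOfShape J ((Ext ℤ (ModuleCat.{0} A) 1).obj (op (ModuleCat.of A (A ⧸ I)))) := by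
  have hS := idealShortComplex_shortExact I
  have : PreservesColimitsOfShape J
      ((linearCoyoneda ℤ (ModuleCat.{0} A)).obj (op (idealShortComplex I).X₁)) :=
    preservesColimitsOfShape_linearCoyoneda_int (ModuleCat.of A I)
  have : PreservesColimitsOfShape J
      ((linearCoyoneda ℤ (ModuleCat.{0} A)).obj (op (idealShortComplex I).X₂)) :=
    preservesColimitsOfShape_linearCoyoneda_int (ModuleCat.of A A)
  exact preservesColimitsOfShape_of_exact
    ((linearCoyoneda ℤ (ModuleCat.{0} A)).map (idealShortComplex I).f.op)
    (extConnecting ℤ hS) (map_f_comp_extConnecting_app ℤ hS) (epi_extConnecting_app ℤ hS)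
    (exact_extConnecting_app ℤ hS)

lemma fg_of_factors (N : {N : Submodule A (ModuleCat.of A I) // N.FG})
    (p : ModuleCat.of A A ⟶ (quotientFG (ModuleCat.of A I)).obj N)
    (hp : ModuleCat.ofHom I.subtype ≫ p = toQuotientFG (ModuleCat.of A I) N) : I.FG := by
  have hsurj : Function.Surjective p.hom := fun y => by
    obtain ⟨z, rfl⟩ := toQuotientFG_surjective (ModuleCat.of A I) N y
    exact ⟨_, congrArg (fun q => q.hom z) hp⟩
  have : Module.Finite A (I ⧸ N.1) := Module.Finite.of_surjective (M := A) p.hom hsurj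
  have : Module.Finite A N.1 := Module.Finite.iff_fg.2 N.2
  have : Module.Finite A I := Module.Finite.of_submodule_quotient (M := I) N.1
  exact Module.Finite.iff_fg.1 this

lemma exists_extClass_toQuotientFG_eq_zero {S : ShortComplex (ModuleCat.{0} A)}
    (hS : S.ShortExact) [Projective S.X₂]
    [PreservesColimitsOfShape {N : Submodule A S.X₁ // N.FG}
      ((Ext ℤ (ModuleCat.{0} A) 1).obj (op S.X₃))] :
    ∃ N, extClass ℤ hS _ (toQuotientFG S.X₁ N) = 0 := by
  obtain ⟨N₀⟩ : Nonempty {N : Submodule A S.X₁ // N.FG} := inferInstance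
  have hc := isColimitOfPreserves ((Ext ℤ (ModuleCat.{0} A) 1).obj (op S.X₃))
    (isColimitQuotientFGCocone S.X₁)
  have hx : (((Ext ℤ (ModuleCat.{0} A) 1).obj (op S.X₃)).map
      ((quotientFGCocone S.X₁).ι.app N₀)).hom (extClass ℤ hS _ (toQuotientFG S.X₁ N₀)) = 0 := by
    have : toQuotientFG S.X₁ N₀ ≫ (quotientFGCocone S.X₁).ι.app N₀ = 0 := comp_zero
    exact (map_extClass ℤ hS _ _).trans ((congrArg _ this).trans (map_zero _))
  obtain ⟨N, f, g, h⟩ := Concrete.isColimit_exists_of_rep_eq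
    (quotientFG S.X₁ ⋙ (Ext ℤ (ModuleCat.{0} A) 1).obj (op S.X₃)) hc _ 0
    (hx.trans (map_zero (((Ext ℤ (ModuleCat.{0} A) 1).obj (op S.X₃)).map
      ((quotientFGCocone S.X₁).ι.app N₀)).hom).symm)
  refine ⟨N, ?_⟩
  rw [← toQuotientFG_map S.X₁ f, ← map_extClass]
  exact h.trans (map_zero (((Ext ℤ (ModuleCat.{0} A) 1).obj (op S.X₃)).map
    ((quotientFG S.X₁).map g)).hom)

lemma fg_of_preservesColimitsOfShape_ext_one
    [PreservesColimitsOfShape {N : Submodule A I // N.FG}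
      ((Ext ℤ (ModuleCat.{0} A) 1).obj (op (ModuleCat.of A (A ⧸ I))))] : I.FG := by
  have hS := idealShortComplex_shortExact I
  have : PreservesColimitsOfShape {N : Submodule A (idealShortComplex I).X₁ // N.FG}
      ((Ext ℤ (ModuleCat.{0} A) 1).obj (op (idealShortComplex I).X₃)) := ‹_›
  obtain ⟨N, hN⟩ := exists_extClass_toQuotientFG_eq_zero hS
  obtain ⟨p, hp⟩ := exists_of_extClass_eq_zero ℤ hS _ hN
  exact fg_of_factors I N p hp

end ModuleCat

theorem quotient_by_small_nonfg_ideal (R : Type) [Ring R] (I : Ideal Rᵐᵒᵖ)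
    (hsmall : IsSmallModule R (ModuleCat.of Rᵐᵒᵖ I)) (hnfg : ¬ I.FG) :
    Module.Finite Rᵐᵒᵖ (ModuleCat.of Rᵐᵒᵖ (Rᵐᵒᵖ ⧸ I)) ∧
    CommutesWithDirectSums R (ModuleCat.of Rᵐᵒᵖ (Rᵐᵒᵖ ⧸ I)) ∧
    ¬ CommutesWithDirectLimits R (ModuleCat.of Rᵐᵒᵖ (Rᵐᵒᵖ ⧸ I)) := by
  refine ⟨inferInstanceAs (Module.Finite Rᵐᵒᵖ (Rᵐᵒᵖ ⧸ I)), fun ι => ?_, fun h => hnfg ?_⟩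
  · have := hsmall ι
    exact ModuleCat.preservesColimitsOfShape_ext_one_quotient I (Discrete ι)
  · have := h {N : Submodule Rᵐᵒᵖ I // N.FG}
    exact ModuleCat.fg_of_preservesColimitsOfShape_ext_one I
end
end

section
/- Let L be a right R-module of projective dimension at most 1 and K a finitely presented submodule of L, and set M = L/K. Then Ext¹_R(M, −) preserves direct sums of copies of R if and only if M is an fp-Ω¹-module (i.e., there is an exact sequence 0 → U → Q → M → 0 with Q projective and U finitely presented). -/
open CategoryTheory CategoryTheory.Limits Opposite

noncomputable section

section LinearAlgebra

variable {S : Type*} [Ring S]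

theorem Submodule.FG.exists_finset_le_supported {ι A : Type*} [AddCommGroup A] [Module S A]
    {N : Submodule S (ι →₀ A)} (hN : N.FG) :
    ∃ s : Finset ι, N ≤ Finsupp.supported A S (s : Set ι) := by
  classical
  obtain ⟨t, rfl⟩ := hN
  refine ⟨t.biUnion Finsupp.support, Submodule.span_le.2 fun x hx => ?_⟩
  simp only [SetLike.mem_coe, Finsupp.mem_supported]
  exact_mod_cast Finset.subset_biUnion_of_mem Finsupp.support hx

/-- Every homomorphism from the kernel of `p` to a direct sum of copies of `A` agrees, up to a
homomorphism into a finite subsum, with the restriction of a homomorphism on the domain of `p`. -/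
def ExtendsModFinite (A : Type*) [AddCommGroup A] [Module S A] {P M : Type*} [AddCommGroup P]
    [Module S P] [AddCommGroup M] [Module S M] (p : P →ₗ[S] M) : Prop :=
  ∀ (ι : Type) (f : LinearMap.ker p →ₗ[S] ι →₀ A), ∃ (g : P →ₗ[S] ι →₀ A) (s : Finset ι),
    ∀ x : LinearMap.ker p, f x - g x ∈ Finsupp.supported A S (s : Set ι)

variable {A B P P' M : Type*} [AddCommGroup A] [Module S A] [AddCommGroup B] [Module S B]
  [AddCommGroup P] [Module S P] [AddCommGroup P'] [Module S P'] [AddCommGroup M] [Module S M]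

theorem ExtendsModFinite.of_equiv (e : A ≃ₗ[S] B) {p : P →ₗ[S] M} (h : ExtendsModFinite A p) :
    ExtendsModFinite B p := by
  intro ι f
  let E := Finsupp.mapRange.linearEquiv (α := ι) e
  obtain ⟨g, s, hs⟩ := h ι (E.symm.toLinearMap ∘ₗ f)
  refine ⟨E.toLinearMap ∘ₗ g, s, fun x => ?_⟩
  rw [Finsupp.mem_supported']
  intro i hi
  have h1 := (Finsupp.mem_supported' _ _).1 (hs x) i hi
  have h2 : f x - E (g x) = E (E.symm (f x) - g x) := by simp
  simp only [LinearMap.comp_apply, LinearEquiv.coe_coe] at h1 ⊢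
  rw [h2]
  change e ((E.symm (f x) - g x) i) = 0
  rw [h1, map_zero]

/-- The property `ExtendsModFinite` does not depend on the choice of projective presentation. -/
theorem ExtendsModFinite.of_projective [Module.Projective S P] [Module.Projective S P']
    {p : P →ₗ[S] M} {p' : P' →ₗ[S] M} (hp : Function.Surjective p)
    (hp' : Function.Surjective p') (h : ExtendsModFinite A p) : ExtendsModFinite A p' := by
  obtain ⟨α, hα⟩ := Module.projective_lifting_property p' p hp'
  obtain ⟨β, hβ⟩ := Module.projective_lifting_property p p' hp
  have hα' (x) : p' (α x) = p x := LinearMap.congr_fun hα x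
  have hβ' (x) : p (β x) = p' x := LinearMap.congr_fun hβ x
  let α₁ : LinearMap.ker p →ₗ[S] LinearMap.ker p' := α.restrict fun x hx => by
    simpa [hα'] using hx
  let β₁ : LinearMap.ker p' →ₗ[S] LinearMap.ker p := β.restrict fun x hx => by
    simpa [hβ'] using hx
  let γ : P' →ₗ[S] LinearMap.ker p' := (LinearMap.id - α ∘ₗ β).codRestrict _ fun x => by
    simp [hα', hβ']
  intro ι f
  obtain ⟨g, s, hs⟩ := h ι (f ∘ₗ α₁)
  refine ⟨g ∘ₗ β + f ∘ₗ γ, s, fun x => ?_⟩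
  have hx : x = γ x + α₁ (β₁ x) := by
    ext
    simp [γ, α₁, β₁]
  have := hs (β₁ x)
  have hfx : f x = f (γ x) + f (α₁ (β₁ x)) := by rw [← map_add, ← hx]
  have hsub : f x - (g ∘ₗ β + f ∘ₗ γ) x = (f ∘ₗ α₁) (β₁ x) - g (β₁ x) := by
    rw [hfx]
    change _ - (g (β₁ x) + f (γ x)) = f (α₁ (β₁ x)) - g (β₁ x)
    abel
  rw [hsub]
  exact this

theorem ExtendsModFinite.of_fg_ker {p : P →ₗ[S] M} (h : (LinearMap.ker p).FG) :
    ExtendsModFinite A p := by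
  intro ι f
  have : Module.Finite S (LinearMap.ker p) := Module.Finite.iff_fg.2 h
  have hf : (LinearMap.range f).FG := Module.Finite.iff_fg.1 inferInstance
  obtain ⟨s, hs⟩ := hf.exists_finset_le_supported
  exact ⟨0, s, fun x => by simpa using hs (LinearMap.mem_range_self f x)⟩

theorem ExtendsModFinite.exists_finitePresentation_ker [Module.Projective S P] {p : P →ₗ[S] M}
    (h : ExtendsModFinite S p) (hp : Function.Surjective p) {ι : Type}
    (φ : (ι →₀ S) →ₗ[S] LinearMap.ker p) (hφ : Function.Surjective φ)
    (hker : (LinearMap.ker φ).FG) :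
    ∃ Q : Submodule S P, Module.Projective S Q ∧ Function.Surjective (p.domRestrict Q) ∧
      Module.FinitePresentation S (LinearMap.ker (p.domRestrict Q)) := by
  classical
  let pr (s : Finset ι) : (ι →₀ S) →ₗ[S] (ι →₀ S) :=
    (Finsupp.supported S S ((s : Set ι)ᶜ)).subtype ∘ₗ Finsupp.restrictDom S S ((s : Set ι)ᶜ)
  have pr_apply (s : Finset ι) (x : ι →₀ S) (i : ι) : pr s x i = if i ∈ s then 0 else x i := by
    by_cases hi : i ∈ s <;> simp [pr, hi]
  have pr_eq_zero (s : Finset ι) (x : ι →₀ S) :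
      pr s x = 0 ↔ x ∈ Finsupp.supported S S (s : Set ι) := by
    rw [Finsupp.mem_supported', Finsupp.ext_iff]
    refine forall_congr' fun i => ?_
    by_cases hi : i ∈ s <;> simp [pr_apply, hi]
  obtain ⟨s, hs⟩ := hker.exists_finset_le_supported
  let f : LinearMap.ker p →ₗ[S] (ι →₀ S) :=
    ((LinearMap.ker φ).liftQ (pr s) fun x hx => (pr_eq_zero s x).2 (hs hx)) ∘ₗ
      (φ.quotKerEquivOfSurjective hφ).symm.toLinearMap
  have hf (y) : f (φ y) = pr s y := by
    have : (φ.quotKerEquivOfSurjective hφ).symm (φ y) = (LinearMap.ker φ).mkQ y := by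
      rw [LinearEquiv.symm_apply_eq]; rfl
    simp only [f, LinearMap.comp_apply, LinearEquiv.coe_coe, this]
    exact Submodule.liftQ_apply _ _ _
  obtain ⟨g, t, ht⟩ := h ι f
  let π := pr (s ∪ t)
  have hπ (y) : π (g (φ y)) = π y := by
    have := ht (φ y)
    rw [hf, Finsupp.mem_supported'] at this
    ext i
    by_cases hi : i ∈ s ∪ t
    · simp [π, pr_apply, hi]
    · have h1 := this i (by simp at hi; simpa using hi.2)
      simp only [Finset.mem_union, not_or] at hi
      simp [pr_apply, hi, sub_eq_zero] at h1
      simp [π, pr_apply, hi, h1]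
  have hππ (y) : π (π y) = π y := by
    ext i
    simp only [π, pr_apply]
    split_ifs <;> rfl
  let g' := π ∘ₗ g
  have hg' (x) : g' (φ (g' x)) = g' x := by
    simp [g', hπ, hππ]
  let Q := LinearMap.ker g'
  let r : P →ₗ[S] Q :=
    (LinearMap.id - (LinearMap.ker p).subtype ∘ₗ φ ∘ₗ g').codRestrict Q fun x => by
      simp [Q, hg']
  have hr' (x : P) : (r x : P) = x - φ (g' x) := rfl
  have hr : r ∘ₗ Q.subtype = LinearMap.id := by
    ext x
    have := x.2
    simp only [Q, LinearMap.mem_ker] at this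
    simp [hr', this]
  refine ⟨Q, Module.Projective.of_split Q.subtype r hr, fun m => ?_, ?_⟩
  · obtain ⟨x, rfl⟩ := hp m
    exact ⟨r x, by simp [hr']⟩
  · let T := Finsupp.supported S S ((s ∪ t : Finset ι) : Set ι)
    have : Module.FinitePresentation S T :=
      Module.FinitePresentation.of_equiv (R := S) (M := ((s ∪ t : Finset ι) : Set ι) →₀ S) (N := T)
        (Finsupp.supportedEquivFinsupp (M := S) (R := S) ((s ∪ t : Finset ι) : Set ι)).symm
    have hT (y : ι →₀ S) : g' (φ y) = 0 ↔ y ∈ T := by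
      simp only [g', LinearMap.comp_apply, hπ]
      exact pr_eq_zero _ _
    obtain ⟨ψ, hψ⟩ : ∃ ψ : T →ₗ[S] LinearMap.ker (p.domRestrict Q),
        ∀ y : T, ((ψ y : Q) : P) = φ y :=
      ⟨(((LinearMap.ker p).subtype ∘ₗ φ ∘ₗ T.subtype).codRestrict Q fun y =>
        (hT y).2 y.2).codRestrict _ fun y => (φ y).2, fun y => rfl⟩
    refine Module.finitePresentation_of_surjective (R := S) (M := T)
      (N := LinearMap.ker (p.domRestrict Q)) ψ ?_ ?_
    · rintro ⟨⟨x, hx⟩, hx'⟩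
      obtain ⟨y, hy⟩ := hφ ⟨x, by simpa using hx'⟩
      refine ⟨⟨y, (hT y).1 (by rw [hy]; exact hx)⟩, ?_⟩
      ext
      simp [hψ, hy]
    · have : (LinearMap.ker ψ).map T.subtype = LinearMap.ker φ := by
        ext y
        simp only [Submodule.mem_map, LinearMap.mem_ker]
        constructor
        · rintro ⟨z, hz, rfl⟩
          have := hψ z
          ext
          simpa [hz] using this.symm
        · intro hy
          refine ⟨⟨y, (hT y).1 (by simp [hy])⟩, ?_, rfl⟩
          ext
          simp [hψ, hy]
      exact Submodule.fg_of_fg_map_injective T.subtype T.injective_subtype (this ▸ hker)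

end LinearAlgebra

section LeftDerived

variable {C D : Type*} [Category* C] [Category* D] [Abelian C] [Abelian D]

/-- The morphism from the homology in degree `1` induced by a morphism which kills boundaries. -/
def ChainComplex.homologyOneDesc (K : ChainComplex D ℕ) {X : D} (φ : K.X 1 ⟶ X)
    (hφ : K.d 2 1 ≫ φ = 0) : K.homology 1 ⟶ X :=
  K.homologyι 1 ≫ K.descOpcycles φ 2 (by simp) hφ

theorem ChainComplex.homologyMap_comp_homologyOneDesc {K L : ChainComplex D ℕ} (f : K ⟶ L)
    {X Y : D} (φ : K.X 1 ⟶ X) (hφ : K.d 2 1 ≫ φ = 0) (ψ : L.X 1 ⟶ Y) (hψ : L.d 2 1 ≫ ψ = 0)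
    (g : X ⟶ Y) (h : f.f 1 ≫ ψ = φ ≫ g) :
    HomologicalComplex.homologyMap f 1 ≫ L.homologyOneDesc ψ hψ =
      K.homologyOneDesc φ hφ ≫ g := by
  have : HomologicalComplex.opcyclesMap f 1 ≫ L.descOpcycles ψ 2 (by simp) hψ =
      K.descOpcycles φ 2 (by simp) hφ ≫ g := by
    rw [← cancel_epi (K.pOpcycles _)]
    simp [h]
  simp [homologyOneDesc, this]

theorem ChainComplex.homologyOneDesc_comp (K : ChainComplex D ℕ) {X : D} (φ : K.X 1 ⟶ X)
    (hφ : K.d 2 1 ≫ φ = 0) (i : X ⟶ K.X 0) (hi : φ ≫ i = K.d 1 0) :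
    K.homologyOneDesc φ hφ ≫ i = 0 := by
  have : K.descOpcycles φ 2 (by simp) hφ ≫ i = K.fromOpcycles 1 0 := by
    rw [← cancel_epi (K.pOpcycles _)]
    simp [hi]
  simp [homologyOneDesc, this]

theorem ChainComplex.homologyOneDesc_exact (K : ChainComplex D ℕ) {X : D} (φ : K.X 1 ⟶ X)
    (hφ : K.d 2 1 ≫ φ = 0) (i : X ⟶ K.X 0) (hi : φ ≫ i = K.d 1 0) (he : Epi φ)
    (hex : (ShortComplex.mk _ _ hφ).Exact) :
    Mono (K.homologyOneDesc φ hφ) ∧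
      (ShortComplex.mk _ _ (K.homologyOneDesc_comp φ hφ i hi)).Exact := by
  let δ := K.descOpcycles φ 2 (by simp) hφ
  have hδ : IsIso δ := by
    let e := (K.opcyclesIsCokernel 2 1 (by simp)).coconePointUniqueUpToIso hex.gIsCokernel
    have : δ = e.hom := by
      rw [← cancel_epi (K.pOpcycles _)]
      have := (K.opcyclesIsCokernel 2 1 (by simp)).comp_coconePointUniqueUpToIso_hom
        hex.gIsCokernel WalkingParallelPair.one
      simpa [δ, e] using this.symm
    rw [this]
    infer_instance
  have hδi : δ ≫ i = K.fromOpcycles 1 0 := by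
    rw [← cancel_epi (K.pOpcycles _)]
    simp [δ, hi]
  have hθ : K.homologyOneDesc φ hφ = K.homologyι 1 ≫ δ := rfl
  refine ⟨by rw [hθ]; infer_instance, ?_⟩
  have hex : (ShortComplex.mk _ _ (K.homologyι_comp_fromOpcycles 1 0)).Exact :=
    ShortComplex.exact_of_f_is_kernel _ (K.homologyIsKernel 1 0 (by simp))
  refine (ShortComplex.exact_iff_of_iso ?_).1 hex
  exact ShortComplex.isoMk (Iso.refl _) (asIso δ) (Iso.refl _)
    (by simp [hθ]) (by simp [hδi])

variable [HasProjectiveResolutions C] {M U : C} (res : ProjectiveResolution M)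
  (u : res.complex.X 1 ⟶ U) (hu : res.complex.d 2 1 ≫ u = 0)

/-- The canonical morphism from the first left derived functor of `F` at `M` to the value
of `F` at a first syzygy of `M`. -/
def leftDerivedOneToSyzygy (F : C ⥤ D) [F.Additive] : (F.leftDerived 1).obj M ⟶ F.obj U :=
  (res.isoLeftDerivedObj F 1).hom ≫
    ChainComplex.homologyOneDesc ((F.mapHomologicalComplex _).obj res.complex) (F.map u)
      ((F.map_comp _ _).symm.trans ((congrArg F.map hu).trans (F.map_zero _ _)))

theorem leftDerivedOneToSyzygy_naturality {F G : C ⥤ D} [F.Additive] [G.Additive] (α : F ⟶ G) :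
    (NatTrans.leftDerived α 1).app M ≫ leftDerivedOneToSyzygy res u hu G =
      leftDerivedOneToSyzygy res u hu F ≫ α.app U := by
  have aux {A A' B B' X Y : D} (e : A ≅ B) (e' : A' ≅ B') (H : B ⟶ B') (h : B ⟶ X) (h' : B' ⟶ Y)
      (g : X ⟶ Y) (w : H ≫ h' = h ≫ g) :
      (e.hom ≫ H ≫ e'.inv) ≫ e'.hom ≫ h' = (e.hom ≫ h) ≫ g := by
    simp [w]
  exact (congrArg (· ≫ _) (ProjectiveResolution.leftDerived_app_eq α res 1)).trans
    (aux (res.isoLeftDerivedObj F 1) (res.isoLeftDerivedObj G 1) _ _ _ _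
      (ChainComplex.homologyMap_comp_homologyOneDesc
        (K := (F.mapHomologicalComplex _).obj res.complex)
        (L := (G.mapHomologicalComplex _).obj res.complex)
        ((NatTrans.mapHomologicalComplex α _).app res.complex) (F.map u) _ (G.map u) _ (α.app U)
        (α.naturality u).symm))

theorem leftDerivedOneToSyzygy_comp (F : C ⥤ D) [F.Additive] (i : U ⟶ res.complex.X 0)
    (hi : u ≫ i = res.complex.d 1 0) :
    leftDerivedOneToSyzygy res u hu F ≫ F.map i = 0 := by
  exact (Category.assoc _ _ _).trans ((congrArg _ (ChainComplex.homologyOneDesc_comp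
    ((F.mapHomologicalComplex _).obj res.complex) (F.map u)
    ((F.map_comp _ _).symm.trans ((congrArg F.map hu).trans (F.map_zero _ _))) (F.map i)
    ((F.map_comp _ _).symm.trans (congrArg F.map hi)))).trans comp_zero)

theorem leftDerivedOneToSyzygy_exact (F : C ⥤ D) [F.Additive] (i : U ⟶ res.complex.X 0)
    (hi : u ≫ i = res.complex.d 1 0)
    (hF : (ShortComplex.mk (F.map (res.complex.d 2 1)) (F.map u)
      (by rw [← F.map_comp, hu, F.map_zero])).Exact) (hFu : Epi (F.map u)) :
    Mono (leftDerivedOneToSyzygy res u hu F) ∧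
      (ShortComplex.mk _ _ (leftDerivedOneToSyzygy_comp res u hu F i hi)).Exact := by
  obtain ⟨h₁, h₂⟩ := ChainComplex.homologyOneDesc_exact
    ((F.mapHomologicalComplex _).obj res.complex) (F.map u)
    ((F.map_comp _ _).symm.trans ((congrArg F.map hu).trans (F.map_zero _ _))) (F.map i)
    ((F.map_comp _ _).symm.trans (congrArg F.map hi)) hFu hF
  refine ⟨@mono_comp _ _ _ _ _ _ _ _ h₁, (ShortComplex.exact_iff_of_iso ?_).1 h₂⟩
  exact ShortComplex.isoMk (res.isoLeftDerivedObj F 1).symm (Iso.refl _) (Iso.refl _)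
    ((Iso.inv_hom_id_assoc (res.isoLeftDerivedObj F 1) _).trans (Category.comp_id _).symm)
    ((Category.id_comp _).trans (Category.comp_id _).symm)

end LeftDerived

section PdLEOne

variable {S : Type} [Ring S]

/-- A module of projective dimension at most one is the quotient of a projective module by a
free module. -/
theorem exists_projective_presentation_of_free
    {P₁ P₀ L : Type} [AddCommGroup P₁] [Module S P₁]
    [AddCommGroup P₀] [Module S P₀] [AddCommGroup L] [Module S L]
    [Module.Projective S P₁] [Module.Projective S P₀] (d : P₁ →ₗ[S] P₀) (q : P₀ →ₗ[S] L)
    (hd : Function.Injective d) (hq : Function.Surjective q) (hdq : Function.Exact d q) :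
    ∃ (P : Type) (_ : AddCommGroup P) (_ : Module S P) (d' : (P₁ →₀ S) →ₗ[S] P)
      (q' : P →ₗ[S] L), Module.Projective S P ∧ Function.Injective d' ∧
        Function.Surjective q' ∧ Function.Exact d' q' := by
  obtain ⟨σ, hσ⟩ := Module.projective_def'.1 (inferInstance : Module.Projective S P₁)
  let ρ := Finsupp.linearCombination S (id : P₁ → P₁)
  have hσ' (z) : ρ (σ z) = z := LinearMap.congr_fun hσ z
  let X := LinearMap.ker ρ
  let r : (P₁ →₀ S) →ₗ[S] X := (LinearMap.id - σ ∘ₗ ρ).codRestrict X fun y => by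
    simp [X, hσ']
  have hr (y) : (r y : P₁ →₀ S) = y - σ (ρ y) := rfl
  have hrX (x : X) : r x = x := by
    ext1
    rw [hr, show ρ x = 0 from x.2, map_zero, sub_zero]
  have : Module.Projective S X := Module.Projective.of_split X.subtype r (LinearMap.ext hrX)
  let d' : (P₁ →₀ S) →ₗ[S] P₀ × X := (d ∘ₗ ρ).prod r
  let q' : P₀ × X →ₗ[S] L := q ∘ₗ LinearMap.fst S P₀ X
  have hd' : Function.Injective d' := by
    rw [injective_iff_map_eq_zero]
    intro y hy
    have h1 : d (ρ y) = 0 := congrArg Prod.fst hy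
    have h2 : r y = 0 := congrArg Prod.snd hy
    have h3 : ρ y = 0 := (map_eq_zero_iff d hd).1 h1
    have h4 := congrArg Subtype.val h2
    rw [hr, h3] at h4
    simpa using h4
  have hq'd' (y) : q' (d' y) = 0 := hdq.apply_apply_eq_zero (ρ y)
  have hex (w) (hw : q' w = 0) : ∃ y, d' y = w := by
    obtain ⟨a, x⟩ := w
    obtain ⟨z, rfl⟩ := (hdq a).1 hw
    refine ⟨σ z + x, Prod.ext ?_ ?_⟩
    · change d (ρ (σ z + x)) = d z
      rw [map_add, hσ', show ρ x = 0 from x.2, add_zero]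
    · change r (σ z + x) = x
      have : r (σ z) = 0 := by ext1; simp [hr, hσ']
      rw [map_add, this, hrX, zero_add]
  have hq' : Function.Surjective q' := fun l => by
    obtain ⟨a, rfl⟩ := hq l
    exact ⟨(a, 0), rfl⟩
  exact ⟨P₀ × X, inferInstance, inferInstance, d', q', inferInstance, hd', hq',
    fun w => ⟨hex w, by rintro ⟨y, rfl⟩; exact hq'd' y⟩⟩

/-- A quotient `L ⧸ K` of a module of projective dimension at most one by a finitely presented
submodule has a first syzygy which is the quotient of a free module by a finitely generated
submodule. -/
theorem exists_projective_presentation_of_finitePresentation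
    {P₁ P₀ L : Type} [AddCommGroup P₁] [Module S P₁]
    [AddCommGroup P₀] [Module S P₀] [AddCommGroup L] [Module S L]
    [Module.Projective S P₁] [Module.Projective S P₀] (d : P₁ →ₗ[S] P₀) (q : P₀ →ₗ[S] L)
    (hd : Function.Injective d) (hq : Function.Surjective q) (hdq : Function.Exact d q)
    (K : Submodule S L) [Module.FinitePresentation S K] :
    ∃ (P : Type) (_ : AddCommGroup P) (_ : Module S P) (p : P →ₗ[S] L ⧸ K) (ι : Type)
      (φ : (ι →₀ S) →ₗ[S] LinearMap.ker p), Module.Projective S P ∧ Function.Surjective p ∧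
        Function.Surjective φ ∧ (LinearMap.ker φ).FG := by
  obtain ⟨P, _, _, d', q', _, hd', hq', hdq'⟩ :=
    exists_projective_presentation_of_free d q hd hq hdq
  have hq'd' (y) : q' (d' y) = 0 := hdq'.apply_apply_eq_zero y
  have hex (w) (hw : q' w = 0) : ∃ y, d' y = w := (hdq' w).1 hw
  obtain ⟨n, m, κ, g, hκ, hgκ⟩ := Module.FinitePresentation.exists_fin' S K
  have hκker : (LinearMap.ker κ).FG := by
    rw [LinearMap.exact_iff.1 hgκ]
    exact Module.Finite.iff_fg.1 inferInstance
  obtain ⟨l, hl⟩ := Module.projective_lifting_property q' (K.subtype ∘ₗ κ) hq'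
  have hl' (v) : q' (l v) = κ v := LinearMap.congr_fun hl v
  let p := K.mkQ ∘ₗ q'
  have hp (w) : p w = 0 ↔ q' w ∈ K := Submodule.Quotient.mk_eq_zero K
  let φ₀ : (P₁ →₀ S) × (Fin n → S) →ₗ[S] LinearMap.ker p :=
    (d'.coprod l).codRestrict _ fun w => by
      rw [LinearMap.mem_ker, hp, LinearMap.coprod_apply, map_add, hq'd', hl', zero_add]
      exact (κ w.2).2
  have hφ₀ (y v) : (φ₀ (y, v) : P) = d' y + l v := rfl
  have hφ₀surj : Function.Surjective φ₀ := by
    rintro ⟨w, hw⟩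
    obtain ⟨v, hv⟩ := hκ ⟨q' w, (hp w).1 hw⟩
    obtain ⟨y, hy⟩ := hex (w - l v) (by rw [map_sub, hl', hv, sub_self])
    exact ⟨(y, v), Subtype.ext (by rw [hφ₀, hy, sub_add_cancel])⟩
  have hφ₀ker : (LinearMap.ker φ₀).FG := by
    refine Submodule.fg_of_fg_map_of_fg_inf_ker (LinearMap.snd S (P₁ →₀ S) (Fin n → S)) ?_ ?_
    · suffices h : (LinearMap.ker φ₀).map (LinearMap.snd S (P₁ →₀ S) (Fin n → S)) =
          LinearMap.ker κ by
        rw [h]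
        exact hκker
      ext v
      simp only [Submodule.mem_map, LinearMap.mem_ker]
      constructor
      · rintro ⟨⟨y, v⟩, h, rfl⟩
        have h1 := congrArg (fun w => q' w.1) h
        simp only [hφ₀, map_add, hq'd', hl', zero_add] at h1
        exact Subtype.ext (by simpa using h1)
      · intro hv
        obtain ⟨y, hy⟩ := hex (- l v) (by rw [map_neg, hl', hv]; simp)
        exact ⟨(y, v), Subtype.ext (by rw [hφ₀, hy]; simp), rfl⟩
    · suffices h : LinearMap.ker φ₀ ⊓ LinearMap.ker (LinearMap.snd S (P₁ →₀ S) (Fin n → S)) ≤ ⊥ by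
        rw [le_bot_iff.1 h]
        exact Submodule.fg_bot
      rintro ⟨y, v⟩ ⟨h, rfl : v = 0⟩
      have h1 := congrArg Subtype.val h
      rw [hφ₀, map_zero, add_zero] at h1
      have : y = 0 := (map_eq_zero_iff d' hd').1 (by simpa using h1)
      simp [this]
  let e : (P₁ ⊕ Fin n →₀ S) ≃ₗ[S] (P₁ →₀ S) × (Fin n → S) :=
    Finsupp.sumFinsuppLEquivProdFinsupp S ≪≫ₗ
      (LinearEquiv.refl S _).prodCongr (Finsupp.linearEquivFunOnFinite S S (Fin n))
  refine ⟨P, _, _, p, P₁ ⊕ Fin n, φ₀ ∘ₗ e.toLinearMap, inferInstance,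
    (Submodule.mkQ_surjective K).comp hq', hφ₀surj.comp e.surjective, ?_⟩
  rw [LinearMap.ker_comp, Submodule.comap_equiv_eq_map_symm]
  exact hφ₀ker.map _

end PdLEOne

section ExtOne

variable {C : Type*} [Category* C] [Abelian C] [EnoughProjectives C] [Linear ℤ C]

/-- The first extension group of `M` is the quotient of the group of morphisms from a first syzygy
of `M` by the morphisms extending to the projective cover. -/
theorem exists_syzygy_presentation_ext {M U : C} (res : ProjectiveResolution M)
    (u : res.complex.X 1 ⟶ U) (hu : res.complex.d 2 1 ≫ u = 0) [Epi u]
    (hex : (ShortComplex.mk _ _ hu).Exact) (i : U ⟶ res.complex.X 0)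
    (hi : u ≫ i = res.complex.d 1 0) :
    ∃ θ : ∀ N : C, (U ⟶ N) →+ ((Ext ℤ C 1).obj (op M)).obj N,
      (∀ N, Function.Surjective (θ N)) ∧
      (∀ N (f : U ⟶ N), θ N f = 0 ↔ ∃ g : res.complex.X 0 ⟶ N, i ≫ g = f) ∧
      ∀ {N N' : C} (h : N ⟶ N') (f : U ⟶ N),
        ((Ext ℤ C 1).obj (op M)).map h (θ N f) = θ N' (f ≫ h) := by
  let Y (N : C) : C ⥤ (ModuleCat ℤ)ᵒᵖ := ((linearYoneda ℤ C).obj N).rightOp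
  let θ (N : C) : ((linearYoneda ℤ C).obj N).obj (op U) ⟶ ((Ext ℤ C 1).obj (op M)).obj N :=
    (leftDerivedOneToSyzygy res u hu (Y N)).unop
  have key (N : C) := leftDerivedOneToSyzygy_exact res u hu (Y N) i hi (by
    let S' := ShortComplex.mk (((linearYoneda ℤ C).obj N).map u.op)
      (((linearYoneda ℤ C).obj N).map (res.complex.d 2 1).op)
      (by rw [← Functor.map_comp, ← op_comp, hu, op_zero, Functor.map_zero])
    have hS' : S'.Exact := by
      rw [ShortComplex.moduleCat_exact_iff]
      intro f hf
      exact ⟨hex.desc f hf, hex.g_desc f hf⟩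
    exact hS'.op) (by
    have : Mono (((linearYoneda ℤ C).obj N).map u.op) := by
      rw [ModuleCat.mono_iff_injective]
      intro f g hfg
      exact (cancel_epi u).1 hfg
    exact inferInstanceAs (Epi (((linearYoneda ℤ C).obj N).map u.op).op))
  refine ⟨fun N => (θ N).hom.toAddMonoidHom, fun N => ?_, fun N f => ?_, fun {N N'} h f => ?_⟩
  · have := (key N).1
    have : Epi (θ N) := inferInstanceAs (Epi (leftDerivedOneToSyzygy res u hu (Y N)).unop)
    exact (ModuleCat.epi_iff_surjective _).1 this
  · have h := (key N).2.unop
    rw [ShortComplex.moduleCat_exact_iff] at h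
    constructor
    · intro hf
      exact h f hf
    · rintro ⟨g, rfl⟩
      exact congrArg (fun t => t.hom g)
        (congrArg Quiver.Hom.unop (leftDerivedOneToSyzygy_comp res u hu (Y N) i hi))
  · have := congrArg Quiver.Hom.unop (leftDerivedOneToSyzygy_naturality res u hu
      (NatTrans.rightOp ((linearYoneda ℤ C).map h)))
    exact congrArg (fun t => t.hom f) this

end ExtOne

section ExtSums

variable {S B : Type} [Ring S] [Ring B]

/-- The coproduct of copies of a module is the module of finitely supported functions. -/
def ModuleCat.sigmaConstIso (Y : ModuleCat.{0} S) (ι : Type) :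
    ∐ (fun _ : ι => Y) ≅ ModuleCat.of S (ι →₀ Y) where
  hom := Sigma.desc fun i => ModuleCat.ofHom (Finsupp.lsingle i)
  inv := ModuleCat.ofHom (Finsupp.lsum ℕ fun i => (Sigma.ι (fun _ : ι => Y) i).hom)
  hom_inv_id := by
    refine Sigma.hom_ext _ _ fun i => ?_
    ext x
    simp
  inv_hom_id := by
    ext : 1
    refine Finsupp.lhom_ext fun i x => ?_
    simp

theorem ModuleCat.ι_sigmaConstIso_hom (Y : ModuleCat.{0} S) {ι : Type} (i : ι) :
    Sigma.ι (fun _ : ι => Y) i ≫ (sigmaConstIso Y ι).hom =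
      ModuleCat.ofHom (Finsupp.lsingle i) :=
  Sigma.ι_desc _ _

section Comparison

variable (T : ModuleCat.{0} S ⥤ ModuleCat.{0} B) (A : ModuleCat.{0} S)

/-- The canonical map from the direct sum of copies of the value of a functor at `A` to its value
at the direct sum of copies of `A`. -/
def finsuppComparison (ι : Type) : (ι →₀ T.obj A) →ₗ[B] T.obj (ModuleCat.of S (ι →₀ A)) :=
  Finsupp.lsum ℕ fun i => (T.map (ModuleCat.ofHom (Finsupp.lsingle i))).hom

theorem finsuppComparison_single {ι : Type} (k : ι) (x : T.obj A) :
    finsuppComparison T A ι (Finsupp.single k x) =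
      (T.map (ModuleCat.ofHom (Finsupp.lsingle k))).hom x := by
  simp [finsuppComparison]

theorem isIso_sigmaDesc_map_iff (ι : Type) :
    IsIso (Sigma.desc fun i : ι => T.map (Sigma.ι (fun _ : ι => A) i)) ↔
      Function.Bijective (finsuppComparison T A ι) := by
  have h : (Sigma.desc fun i : ι => T.map (Sigma.ι (fun _ : ι => A) i)) =
      (ModuleCat.sigmaConstIso (T.obj A) ι).hom ≫ ModuleCat.ofHom (finsuppComparison T A ι) ≫
        T.map (ModuleCat.sigmaConstIso A ι).inv := by
    refine Sigma.hom_ext _ _ fun i => ?_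
    rw [Sigma.ι_desc, ← Category.assoc, ModuleCat.ι_sigmaConstIso_hom, ← Category.assoc,
      ← cancel_mono (T.map (ModuleCat.sigmaConstIso A ι).hom), ← T.map_comp,
      ModuleCat.ι_sigmaConstIso_hom, Category.assoc, ← T.map_comp, Iso.inv_hom_id, T.map_id,
      Category.comp_id]
    ext x
    simp [finsuppComparison_single]
  rw [h, isIso_comp_left_iff, isIso_comp_right_iff]
  exact ConcreteCategory.isIso_iff_bijective _

variable {T A}

/-- If `T` is the cokernel of the restriction map from the morphisms out of `P` to those out of
`ker p`, then its comparison map for sums of copies of `A` is bijective precisely when every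
morphism from `ker p` to such a sum extends to `P` up to a morphism with values in a finite
subsum. -/
theorem bijective_finsuppComparison_iff {P M : Type} [AddCommGroup P] [Module S P]
    [AddCommGroup M] [Module S M] (p : P →ₗ[S] M)
    (θ : ∀ N, (ModuleCat.of S (LinearMap.ker p) ⟶ N) →+ T.obj N)
    (hθ : ∀ N, Function.Surjective (θ N))
    (hθ₀ : ∀ (N) (f : ModuleCat.of S (LinearMap.ker p) ⟶ N), θ N f = 0 ↔
      ∃ g : ModuleCat.of S P ⟶ N, ModuleCat.ofHom (LinearMap.ker p).subtype ≫ g = f)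
    (hθn : ∀ {N N' : ModuleCat.{0} S} (h : N ⟶ N') (f : ModuleCat.of S (LinearMap.ker p) ⟶ N),
      (T.map h).hom (θ N f) = θ N' (f ≫ h)) :
    (∀ ι : Type, Function.Bijective (finsuppComparison T A ι)) ↔ ExtendsModFinite A p := by
  have hinj (ι : Type) : Function.Injective (finsuppComparison T A ι) := by
    have (j : ι) : (T.map (ModuleCat.ofHom (Finsupp.lapply j))).hom ∘ₗ finsuppComparison T A ι =
        Finsupp.lapply j := by
      refine Finsupp.lhom_ext fun k x => ?_
      obtain ⟨f, rfl⟩ := hθ A x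
      rw [LinearMap.comp_apply, finsuppComparison_single, hθn, hθn, Finsupp.lapply_apply]
      by_cases hkj : k = j
      · subst hkj
        rw [Finsupp.single_eq_same]
        congr 1
        ext y
        simp
      · rw [Finsupp.single_eq_of_ne (Ne.symm hkj), ← map_zero (θ A)]
        congr 1
        ext y
        simp [Finsupp.single_eq_of_ne (Ne.symm hkj)]
    rw [injective_iff_map_eq_zero]
    intro t ht
    ext j
    have := LinearMap.congr_fun (this j) t
    rw [LinearMap.comp_apply, ht, map_zero] at this
    exact this.symm
  have hcomp (ι : Type) (s : Finset ι) (z : ι → (ModuleCat.of S (LinearMap.ker p) ⟶ A)) :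
      finsuppComparison T A ι (∑ k ∈ s, Finsupp.single k (θ A (z k))) =
        θ _ (∑ k ∈ s, z k ≫ ModuleCat.ofHom (Finsupp.lsingle k)) := by
    rw [map_sum, map_sum]
    refine Finset.sum_congr rfl fun k _ => ?_
    rw [← hθn, finsuppComparison_single]
  constructor
  · intro h ι f
    obtain ⟨t, ht⟩ := (h ι).2 (θ _ (ModuleCat.ofHom f))
    choose z hz using fun k => hθ A (t k)
    have ht' : ∑ k ∈ t.support, Finsupp.single k (θ A (z k)) = t := by
      simp only [hz]
      exact t.sum_single
    rw [← ht', hcomp, eq_comm, ← sub_eq_zero, ← map_sub, hθ₀] at ht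
    obtain ⟨g, hg⟩ := ht
    refine ⟨g.hom, t.support, fun x => ?_⟩
    have : f x - g.hom x = ∑ k ∈ t.support, Finsupp.single k ((z k).hom x) := by
      have h' : g.hom x = f x - ∑ k ∈ t.support, Finsupp.single k ((z k).hom x) := by
        simpa [ModuleCat.hom_sum] using LinearMap.congr_fun (ModuleCat.hom_ext_iff.1 hg) x
      rw [h', sub_sub_cancel]
    rw [this]
    exact Submodule.sum_mem _ fun k hk => Finsupp.single_mem_supported _ _ hk
  · intro h ι
    refine ⟨hinj ι, fun y => ?_⟩
    obtain ⟨f, rfl⟩ := hθ _ y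
    obtain ⟨g, s, hs⟩ := h ι f.hom
    let r : LinearMap.ker p →ₗ[S] ι →₀ A := f.hom - g ∘ₗ (LinearMap.ker p).subtype
    refine ⟨∑ k ∈ s, Finsupp.single k (θ A (ModuleCat.ofHom (Finsupp.lapply k ∘ₗ r))), ?_⟩
    rw [hcomp, ← sub_eq_zero, ← map_sub, hθ₀]
    refine ⟨- ModuleCat.ofHom g, ?_⟩
    ext x : 2
    have hrx : ∑ k ∈ s, Finsupp.single k (r x k) = r x := by
      have hx : (r x).support ⊆ s := Finset.coe_subset.1 (hs x)
      refine (Finset.sum_subset hx fun k _ hk => ?_).symm.trans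
        (r x).sum_single
      rw [Finsupp.notMem_support_iff.1 hk, Finsupp.single_zero]
    suffices - g x = ∑ k ∈ s, Finsupp.single k (r x k) - f.hom x by simpa [ModuleCat.hom_sum]
    rw [hrx]
    simp [r]

end Comparison

/-- The canonical map on direct sums of copies of `A` is an isomorphism on the first extension
groups of `M` precisely when every morphism from a first syzygy of `M` to a direct sum of copies
of `A` extends to the projective cover up to a morphism with values in a finite subsum. -/
theorem isIso_ext_one_iff_extendsModFinite {M : ModuleCat.{0} S} (res : ProjectiveResolution M)
    (A : ModuleCat.{0} S) :
    (∀ ι : Type, IsIso (Sigma.desc fun i : ι =>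
      ((Ext ℤ (ModuleCat.{0} S) 1).obj (op M)).map (Sigma.ι (fun _ : ι => A) i))) ↔
      ExtendsModFinite (S := S) A (M := M) (ModuleCat.Hom.hom (res.π.f 0)) := by
  let p : res.complex.X 0 →ₗ[S] M := ModuleCat.Hom.hom (res.π.f 0)
  let U : ModuleCat.{0} S := ModuleCat.of S (LinearMap.ker p)
  have hpd (x) : p ((res.complex.d 1 0).hom x) = 0 :=
    LinearMap.congr_fun (ModuleCat.hom_ext_iff.1 res.complex_d_comp_π_f_zero) x
  let u : res.complex.X 1 ⟶ U := ModuleCat.ofHom ((res.complex.d 1 0).hom.codRestrict _ hpd)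
  let i : U ⟶ res.complex.X 0 := ModuleCat.ofHom (LinearMap.ker p).subtype
  have hi : u ≫ i = res.complex.d 1 0 := rfl
  have : Mono i := (ModuleCat.mono_iff_injective _).2 Subtype.val_injective
  have hu : res.complex.d 2 1 ≫ u = 0 := by
    rw [← cancel_mono i, Category.assoc, hi, res.complex.d_comp_d, zero_comp]
  have : Epi u := by
    rw [ModuleCat.epi_iff_surjective]
    rintro ⟨x, hx⟩
    obtain ⟨y, hy⟩ := (ShortComplex.moduleCat_exact_iff _).1 res.exact₀ x hx
    exact ⟨y, Subtype.ext hy⟩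
  have hex : (ShortComplex.mk _ _ hu).Exact := by
    rw [ShortComplex.moduleCat_exact_iff]
    intro x hx
    exact (ShortComplex.moduleCat_exact_iff _).1 (res.exact_succ 0) x (congrArg Subtype.val hx)
  obtain ⟨θ, hθ, hθ₀, hθn⟩ := exists_syzygy_presentation_ext res u hu hex i hi
  simp only [isIso_sigmaDesc_map_iff]
  exact bijective_finsuppComparison_iff p θ hθ hθ₀ hθn

end ExtSums

/-- A ring is isomorphic to its opposite as a right module over itself. -/
def opLinearEquivSelf (R : Type*) [Ring R] : R ≃ₗ[Rᵐᵒᵖ] Rᵐᵒᵖ where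
  __ := MulOpposite.opAddEquiv
  map_smul' r x := by
    induction r using MulOpposite.rec'
    simp

theorem quotient_by_fp_submodule_sumsOfR_iff_fpOmega1
    (R : Type) [Ring R] (L : RMod R) (hpd : HasProjDimLE1 R L)
    (K : Submodule Rᵐᵒᵖ L) (hK : Module.FinitePresentation Rᵐᵒᵖ K) :
    CommutesWithSumsOfR R 1 (ModuleCat.of Rᵐᵒᵖ (↥L ⧸ K)) ↔
      IsOmega1 R (fun X => Module.FinitePresentation Rᵐᵒᵖ X)
        (ModuleCat.of Rᵐᵒᵖ (↥L ⧸ K)) := by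
  obtain ⟨P₁, P₀, d, q, w, _, _, hd, hq, hdq⟩ := hpd
  have : Module.Projective Rᵐᵒᵖ P₁ := (IsProjective.iff_projective _).2 ‹_›
  have : Module.Projective Rᵐᵒᵖ P₀ := (IsProjective.iff_projective _).2 ‹_›
  obtain ⟨P, _, _, p, ι, φ, _, hp, hφ, hφker⟩ :=
    exists_projective_presentation_of_finitePresentation d.hom q.hom
      ((ModuleCat.mono_iff_injective _).1 hd) ((ModuleCat.epi_iff_surjective _).1 hq)
      ((ShortComplex.ShortExact.moduleCat_exact_iff_function_exact _).1 hdq) K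
  let M : RMod R := ModuleCat.of Rᵐᵒᵖ (↥L ⧸ K)
  let res : ProjectiveResolution M := projectiveResolution M
  have : Module.Projective Rᵐᵒᵖ (res.complex.X 0) :=
    (IsProjective.iff_projective _).2 (res.projective 0)
  have hres : Function.Surjective (ModuleCat.Hom.hom (res.π.f 0)) :=
    (ModuleCat.epi_iff_surjective _).1 inferInstance
  refine (isIso_ext_one_iff_extendsModFinite res (regR R)).trans ⟨fun h => ?_, ?_⟩
  · obtain ⟨Q, _, hQ, hfp⟩ := ((h.of_projective hres hp).of_equiv
      (opLinearEquivSelf R)).exists_finitePresentation_ker hp φ hφ hφker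
    let p' := p.domRestrict Q
    refine ⟨ModuleCat.of _ (LinearMap.ker p'), ModuleCat.of _ Q,
      ModuleCat.ofHom (LinearMap.ker p').subtype, ModuleCat.ofHom p', ?_, ?_, ?_, ?_, ?_, hfp⟩
    · ext x
      exact x.2
    · exact (ModuleCat.mono_iff_injective _).2 Subtype.val_injective
    · exact (ModuleCat.epi_iff_surjective _).2 hQ
    · rw [ShortComplex.moduleCat_exact_iff]
      exact fun x hx => ⟨⟨x, hx⟩, rfl⟩
    · exact (IsProjective.iff_projective _).1 ‹_›
  · rintro ⟨U, Q, i, p', w', hi, hp', hex, _, hfp⟩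
    have : Module.Projective Rᵐᵒᵖ Q := (IsProjective.iff_projective _).2 ‹_›
    have hex' := (ShortComplex.ShortExact.moduleCat_exact_iff_function_exact _).1 hex
    have hker : (LinearMap.ker p'.hom).FG := by
      rw [LinearMap.exact_iff.1 hex']
      have : Module.FinitePresentation Rᵐᵒᵖ U := hfp
      exact Module.Finite.iff_fg.1 inferInstance
    exact (ExtendsModFinite.of_fg_ker hker).of_projective
      ((ModuleCat.epi_iff_surjective _).1 hp') hres
end
end

section
/- Every module M over any ring R can be written as the inverse limit of an inverse system of injective R-modules. -/
open CategoryTheory CategoryTheory.Limits Opposite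

noncomputable section

/-- A realization of the module `M` as the inverse limit of an inverse system
(indexed by a downward directed preorder) of injective modules. -/
structure InjectiveInverseLimitPresentation (R : Type) [Ring R] (M : RMod R) where
  J : Type
  [instPreorder : Preorder J]
  [instNonempty : Nonempty J]
  directed : IsDirected J (· ≥ ·)
  D : J ⥤ RMod R
  inj : ∀ j : J, Injective (D.obj j)
  iso : M ≅ limit D

open Cardinal in
/-- For `f : E →ₗ[A] F`, the submodule of `E × (X → F)` of those pairs `(a, b)` for which `b` has
support of cardinality at most `κ` and is constantly equal to `f a` on `S`. -/
def constrainedSubmodule {A E F X : Type} [Ring A] [AddCommGroup E] [Module A E]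
    [AddCommGroup F] [Module A F] (f : E →ₗ[A] F) (κ : Cardinal.{0}) (hκ : ℵ₀ ≤ κ) (S : Set X) :
    Submodule A (E × (X → F)) where
  carrier := {p | #(Function.support p.2) ≤ κ ∧ ∀ x ∈ S, p.2 x = f p.1}
  zero_mem' := by simp
  add_mem' := by
    rintro p q ⟨hp, hp'⟩ ⟨hq, hq'⟩
    refine ⟨(mk_le_mk_of_subset (Function.support_add p.2 q.2)).trans
      ((mk_union_le _ _).trans (add_le_of_le hκ hp hq)), fun x hx => ?_⟩
    simp [hp' x hx, hq' x hx]
  smul_mem' := by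
    rintro c p ⟨hp, hp'⟩
    refine ⟨(mk_le_mk_of_subset (Function.support_const_smul_subset c p.2)).trans hp,
      fun x hx => ?_⟩
    simp [hp' x hx]

open Cardinal in
theorem constrainedSubmodule_baer {A E F X : Type} [Ring A] [AddCommGroup E] [Module A E]
    [AddCommGroup F] [Module A F] (f : E →ₗ[A] F) {κ : Cardinal.{0}} (hκ : ℵ₀ ≤ κ)
    (hA : #A ≤ κ) (hE : Module.Baer A E) (hF : Module.Baer A F) {S : Set X} (hS : #S ≤ κ) :
    Module.Baer A (constrainedSubmodule f κ hκ S) := by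
  classical
  intro L g
  let g₁ : L →ₗ[A] E := LinearMap.fst A E (X → F) ∘ₗ Submodule.subtype _ ∘ₗ g
  let g₂ (x : X) : L →ₗ[A] F :=
    LinearMap.proj x ∘ₗ LinearMap.snd A E (X → F) ∘ₗ Submodule.subtype _ ∘ₗ g
  obtain ⟨h₁, hh₁⟩ := hE L g₁
  choose h₂ hh₂ using fun x => hF L (g₂ x)
  let T : Set X := ⋃ r : L, Function.support (g r).1.2
  have hT : #T ≤ κ := by
    refine (mk_iUnion_le _).trans (mul_le_of_le hκ ((mk_subtype_le _).trans hA) ?_)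
    exact ciSup_le' fun r => (g r).2.1
  let k (x : X) : A →ₗ[A] F := if x ∈ S then f ∘ₗ h₁ else if x ∈ T then h₂ x else 0
  refine ⟨(h₁.prod (LinearMap.pi k)).codRestrict _ fun r => ⟨?_, fun x hx => ?_⟩, ?_⟩
  · refine (mk_le_mk_of_subset (t := S ∪ T) fun x hx => ?_).trans
      ((mk_union_le _ _).trans (add_le_of_le hκ hS hT))
    by_contra hx'
    rw [Set.mem_union, not_or] at hx'
    exact hx (by simp [k, hx'.1, hx'.2])
  · simp [k, hx]
  · intro r hr
    have e₁ : h₁ r = (g ⟨r, hr⟩).1.1 := hh₁ r hr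
    refine Subtype.ext (Prod.ext e₁ (funext fun x => ?_))
    change k x r = (g ⟨r, hr⟩).1.2 x
    by_cases hxS : x ∈ S
    · rw [(g ⟨r, hr⟩).2.2 x hxS, ← e₁]
      simp [k, hxS]
    · by_cases hxT : x ∈ T
      · simp only [k, hxS, hxT, if_true, if_false]
        exact hh₂ x r hr
      · have : (g ⟨r, hr⟩).1.2 x = 0 := by
          by_contra h
          exact hxT (Set.mem_iUnion.2 ⟨⟨r, hr⟩, h⟩)
        simp [k, hxS, hxT, this]

theorem constrainedSubmodule_anti {A E F X : Type} [Ring A] [AddCommGroup E] [Module A E]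
    [AddCommGroup F] [Module A F] (f : E →ₗ[A] F) (κ : Cardinal.{0})
    (hκ : Cardinal.aleph0 ≤ κ) {S T : Set X} (h : S ⊆ T) :
    constrainedSubmodule f κ hκ T ≤ constrainedSubmodule f κ hκ S :=
  fun _ hp => ⟨hp.1, fun x hx => hp.2 x (h hx)⟩

/-- The inverse system of the submodules `constrainedSubmodule f κ hκ S`, indexed by the subsets
`S` of `X` of cardinality at most `κ` ordered by reverse inclusion. -/
def constrainedSystem {A E F : Type} (X : Type) [Ring A] [AddCommGroup E] [Module A E]
    [AddCommGroup F] [Module A F] (f : E →ₗ[A] F) (κ : Cardinal.{0})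
    (hκ : Cardinal.aleph0 ≤ κ) :
    {S : Set X // Cardinal.mk S ≤ κ}ᵒᵈ ⥤ ModuleCat.{0} A where
  obj S := ModuleCat.of A (constrainedSubmodule f κ hκ S.ofDual.1)
  map h := ModuleCat.ofHom (Submodule.inclusion (constrainedSubmodule_anti f κ hκ (leOfHom h)))

open Cardinal in
/-- The cone over `constrainedSystem X f κ hκ` given by a map `i` with `f ∘ₗ i = 0`. -/
def constrainedCone {A E F M : Type} (X : Type) [Ring A] [AddCommGroup E] [Module A E]
    [AddCommGroup F] [Module A F] [AddCommGroup M] [Module A M] (f : E →ₗ[A] F)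
    (κ : Cardinal.{0}) (hκ : ℵ₀ ≤ κ) (i : M →ₗ[A] E) (hi : ∀ m, f (i m) = 0) :
    Cone (constrainedSystem X f κ hκ) where
  pt := ModuleCat.of A M
  π :=
    { app S := ModuleCat.ofHom ((LinearMap.inl A E (X → F) ∘ₗ i).codRestrict
        (constrainedSubmodule f κ hκ S.ofDual.1) fun m => ⟨by simp, fun x _ => by simp [hi]⟩)
      naturality _ _ _ := rfl }

open Cardinal in
theorem constrainedCone_lift_bijective {A E F M X : Type} [Ring A] [AddCommGroup E] [Module A E]
    [AddCommGroup F] [Module A F] [AddCommGroup M] [Module A M] (f : E →ₗ[A] F)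
    {κ : Cardinal.{0}} (hκ : ℵ₀ ≤ κ) (hX : κ < #X) (i : M →ₗ[A] E)
    (hi : ∀ m, f (i m) = 0) (hinj : Function.Injective i)
    (hex : ∀ a, f a = 0 → ∃ m, i m = a) :
    Function.Bijective (limit.lift _ (constrainedCone X f κ hκ i hi)) := by
  let J := {S : Set X // #S ≤ κ}ᵒᵈ
  let D := constrainedSystem X f κ hκ
  let c := constrainedCone X f κ hκ i hi
  let p (S : J) (z : (limit D : ModuleCat A)) : constrainedSubmodule f κ hκ S.ofDual.1 :=
    limit.π D S z
  let bot : J := OrderDual.toDual ⟨∅, by simp⟩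
  have hp (S : J) (z : (limit D : ModuleCat A)) : (p S z).1 = (p bot z).1 := by
    have h : S ⟶ bot := homOfLE (Set.empty_subset S.ofDual.1)
    have := ConcreteCategory.congr_hom (limit.w D h) z
    exact congrArg Subtype.val this
  have hl (S : J) (m : M) : (p S (limit.lift D c m)).1 = (i m, 0) := by
    have := ConcreteCategory.congr_hom (limit.lift_π c S) m
    exact congrArg Subtype.val this
  refine ⟨fun m n h => hinj ?_, fun z => ?_⟩
  · have := (hl bot m).symm.trans ((congrArg (fun z => (p bot z).1) h).trans (hl bot n))
    exact congrArg Prod.fst this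
  · have hz (x : X) : (p bot z).1.2 x = f (p bot z).1.1 := by
      let S : J := OrderDual.toDual ⟨{x}, by simpa using one_le_aleph0.trans hκ⟩
      have := (p S z).2.2 x rfl
      rwa [hp S z] at this
    have hf : f (p bot z).1.1 = 0 := by
      by_contra h
      refine hX.not_ge ?_
      have hs : Function.support (p bot z).1.2 = Set.univ :=
        Set.eq_univ_of_forall fun x => by rwa [Function.mem_support, hz]
      have := (p bot z).2.1
      rwa [hs, mk_univ] at this
    obtain ⟨m, hm⟩ := hex _ hf
    refine ⟨m, Concrete.limit_ext D _ _ fun S => Subtype.ext ?_⟩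
    refine (hl S m).trans (Eq.trans ?_ (hp S z).symm)
    exact Prod.ext hm (funext fun x => ((hz x).trans hf).symm)

theorem every_module_is_inverse_limit_of_injectives (R : Type) [Ring R] (M : RMod R) :
    Nonempty (InjectiveInverseLimitPresentation R M) := by
  let E := Injective.under M
  let i := Injective.ι M
  let F := Injective.under (cokernel i)
  let f : E ⟶ F := cokernel.π i ≫ Injective.ι _
  have hE : Module.Baer Rᵐᵒᵖ E := Module.Baer.iff_injective.2
    ((Module.injective_iff_injective_object Rᵐᵒᵖ E).2 (inferInstanceAs (Injective E)))
  have hF : Module.Baer Rᵐᵒᵖ F := Module.Baer.iff_injective.2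
    ((Module.injective_iff_injective_object Rᵐᵒᵖ F).2 (inferInstanceAs (Injective F)))
  have w : i ≫ f = 0 := by simp [f]
  have hex : (ShortComplex.mk i f w).Exact :=
    (ShortComplex.exact_iff_of_epi_of_isIso_of_mono
      (S₁ := ShortComplex.mk i (cokernel.π i) (by simp))
      (S₂ := ShortComplex.mk i f w)
      { τ₁ := 𝟙 _, τ₂ := 𝟙 _, τ₃ := Injective.ι _ }).1 (ShortComplex.exact_cokernel i)
  let κ : Cardinal.{0} := max (Cardinal.mk Rᵐᵒᵖ) Cardinal.aleph0
  have hκ : Cardinal.aleph0 ≤ κ := le_max_right _ _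
  let X : Type := Set κ.out
  have hX : κ < Cardinal.mk X := by
    rw [Cardinal.mk_set, Cardinal.mk_out]
    exact Cardinal.cantor κ
  have hi (m : M) : f.hom (i.hom m) = 0 := ConcreteCategory.congr_hom w m
  have hb := constrainedCone_lift_bijective (X := X) f.hom hκ hX i.hom hi
    ((ModuleCat.mono_iff_injective i).1 inferInstance)
    (fun a ha => (ShortComplex.moduleCat_exact_iff _).1 hex a ha)
  exact ⟨{
    J := {S : Set X // Cardinal.mk S ≤ κ}ᵒᵈ
    instNonempty := ⟨OrderDual.toDual ⟨∅, by simp⟩⟩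
    directed := ⟨fun S T => ⟨OrderDual.toDual ⟨S.ofDual.1 ∪ T.ofDual.1,
      (Cardinal.mk_union_le _ _).trans (Cardinal.add_le_of_le hκ S.ofDual.2 T.ofDual.2)⟩,
      Set.subset_union_left, Set.subset_union_right⟩⟩
    D := constrainedSystem X f.hom κ hκ
    inj := fun S => (Module.injective_iff_injective_object Rᵐᵒᵖ _).1 (Module.Baer.iff_injective.1
      (constrainedSubmodule_baer f.hom hκ (le_max_left _ _) hE hF S.ofDual.2))
    iso := (LinearEquiv.ofBijective
      (limit.lift _ (constrainedCone X f.hom κ hκ i.hom hi)).hom hb).toModuleIso }⟩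
end
end
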